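/- Let α, β ∈ ℂ and let (p, q) be a transcendental solution on ℂ of the Hamiltonian system with T(r, p) = O(r²). For each cube root of unity ρ let Λ^ρ be the set of poles of p with residue ρ, and suppose that for each such ρ the limit 𝔫^ρ := lim_{r→∞} (4π/(√3·r²))·n(r, Λ^ρ) exists. Let ρ₁, ρ₂, ρ₃ be the three cube roots of unity and assume ρ₁²·α − ρ₁·β + 1 = 0 and 𝔫^{ρ₁} > (𝔫^{ρ₂} + 𝔫^{ρ₃})/2. Then ρ₁²·p(z) + ρ₁·q(z) − z = 0 identically on ℂ. -/

import Mathlib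

open Filter Topology Asymptotics

/-- The positive part of the logarithm, `log⁺ x = max 0 (log x)`. -/
noncomputable def logPlus (x : ℝ) : ℝ := max 0 (Real.log x)

/-- The Nevanlinna proximity function
`m(r, f) = (2π)⁻¹ ∫₀^{2π} log⁺ |f(r e^{iθ})| dθ`. -/
noncomputable def proximity (f : ℂ → ℂ) (r : ℝ) : ℝ :=
  (2 * Real.pi)⁻¹ * ∫ θ in (0:ℝ)..(2 * Real.pi),
    logPlus ‖f ((r : ℂ) * Complex.exp ((θ : ℂ) * Complex.I))‖

/-- The multiplicity of `z₀` as a pole of `f`: the least `k` such that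
`(z − z₀)^k · f(z)` has a finite limit at `z₀` (and `0` if there is no such `k`). -/
noncomputable def poleMult (f : ℂ → ℂ) (z₀ : ℂ) : ℕ :=
  sInf {k : ℕ | ∃ c : ℂ, Tendsto (fun z => (z - z₀) ^ k * f z) (𝓝[≠] z₀) (𝓝 c)}

/-- The unintegrated counting function of poles,
`n(t, f) = Σ_{|z| ≤ t} (multiplicity of z as pole of f)`. -/
noncomputable def nPoles (f : ℂ → ℂ) (t : ℝ) : ℝ :=
  ∑ᶠ z ∈ Metric.closedBall (0 : ℂ) t, (poleMult f z : ℝ)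

/-- The integrated counting function of poles,
`N(r, f) = ∫₀^r (n(t,f) − n(0,f))/t dt + n(0,f) log r`. -/
noncomputable def countingN (f : ℂ → ℂ) (r : ℝ) : ℝ :=
  (∫ t in (0:ℝ)..r, (nPoles f t - nPoles f 0) / t) + nPoles f 0 * Real.log r

/-- The Nevanlinna characteristic `T(r, f) = m(r, f) + N(r, f)`. -/
noncomputable def nevT (f : ℂ → ℂ) (r : ℝ) : ℝ := proximity f r + countingN f r

/-- `(p, q)` is a (meromorphic) solution on `ℂ` of the Hamiltonian system
`p′ = −q² − z·p − α`, `q′ = p² + z·q + β`. -/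
def IsHamSolution (α β : ℂ) (p q : ℂ → ℂ) : Prop :=
  MeromorphicOn p Set.univ ∧ MeromorphicOn q Set.univ ∧
    ∀ z : ℂ, AnalyticAt ℂ p z → AnalyticAt ℂ q z →
      deriv p z = -(q z) ^ 2 - z * p z - α ∧ deriv q z = (p z) ^ 2 + z * q z + β

/-- A function is rational if it agrees with a quotient of polynomials away from
finitely many points. -/
def IsRationalFn (f : ℂ → ℂ) : Prop :=
  ∃ P Q : Polynomial ℂ, Q ≠ 0 ∧ ∀ᶠ z in Filter.cofinite, f z = P.eval z / Q.eval z

/-- `z₀` is a pole of `f`: `|f| → ∞` at `z₀`. -/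
def IsPole (f : ℂ → ℂ) (z₀ : ℂ) : Prop :=
  Tendsto (fun z => ‖f z‖) (𝓝[≠] z₀) atTop

/-- `f` has residue `ρ` at a simple pole `z₀`: `(z − z₀)·f(z) → ρ` at `z₀`. -/
def HasResidue (f : ℂ → ℂ) (z₀ ρ : ℂ) : Prop :=
  Tendsto (fun z => (z - z₀) * f z) (𝓝[≠] z₀) (𝓝 ρ)

/-- `n(r, S)`: the number of points of `S` in the closed disc of radius `r`. -/
noncomputable def setCount (S : Set ℂ) (r : ℝ) : ℝ :=
  ((S ∩ Metric.closedBall (0 : ℂ) r).ncard : ℝ)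

/-- The closed sector `{t·e^{iθ} : t > 0, a ≤ θ ≤ b}`. -/
def ClosedSector (a b : ℝ) : Set ℂ :=
  {z | ∃ t θ : ℝ, 0 < t ∧ a ≤ θ ∧ θ ≤ b ∧ z = (t : ℂ) * Complex.exp ((θ : ℂ) * Complex.I)}

/-!
Suppose `f = ρ² p + ρ q - z` does not vanish identically. The relation `ρ² α - ρ β + 1 = 0` makes
`f` a Darboux polynomial of the system, `f' = D f` with `D = ρ² p - ρ q`, so that `D = f' / f`.
Comparing residues, `f` has double zeros at the points of `Λ^ρ`, simple poles at all other poles of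
`p`, and no further zeros or poles; hence `n(r, 1/f) - n(r, f) = 3 n(r, Λ^ρ) - n(r, p)`, which by
the density assumption is at least a constant times `r²`. On the other hand `(f + 2z)²` is a
polynomial in `z`, `D` and `D'`, and the lemma on the logarithmic derivative gives
`m(r, D) = O(log r)`; therefore `m(r, f) = O(log r)`. This contradicts Jensen's formula,
`m(r, f) ≥ N(r, 1/f) - N(r, f) - O(1)`.
-/

/-! ### Circle averages of `‖z - u‖ ^ (-1/2)` -/

section CircleAverage

open MeasureTheory Real

lemma intervalIntegrable_inv_sqrt_abs_sin (a b : ℝ) :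
    IntervalIntegrable (fun θ ↦ (√|sin θ|)⁻¹) volume a b := by
  have integrable_right : IntervalIntegrable (fun x : ℝ ↦ (√|x|)⁻¹) volume 0 (π / 2) :=
    (intervalIntegral.intervalIntegrable_rpow' (by norm_num : (-1 : ℝ) < -(1 / 2))).congr
      fun x hx ↦ by
        rw [Set.uIoc_of_le (by positivity)] at hx
        rw [sqrt_eq_rpow, abs_of_pos hx.1, rpow_neg hx.1.le]
  have integrable_left : IntervalIntegrable (fun x : ℝ ↦ (√|x|)⁻¹) volume
      (-(π / 2)) 0 := by
    simpa using ((IntervalIntegrable.iff_comp_neg).1 integrable_right).symm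
  have periodic : Function.Periodic (fun θ ↦ (√|sin θ|)⁻¹) π := fun θ ↦ by simp
  refine periodic.intervalIntegrable pi_ne_zero (t := -(π / 2)) ?_ a b
  rw [show -(π / 2) + π = π / 2 by ring]
  refine ((integrable_left.trans integrable_right).const_mul (√(2 / π))⁻¹).mono_fun'
    (by fun_prop) ?_
  filter_upwards [ae_restrict_mem measurableSet_uIoc] with x hx
  rw [Set.uIoc_of_le (by linarith [pi_pos])] at hx
  rcases eq_or_ne x 0 with rfl | hx0
  · simp
  · rw [norm_of_nonneg (by positivity), ← mul_inv, ← sqrt_mul (by positivity)]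
    gcongr
    exact mul_abs_le_abs_sin (abs_le.2 ⟨hx.1.le, hx.2⟩)

lemma abs_sin_sub_arg_le_norm_circleMap_sub {r : ℝ} (hr : 1 ≤ r) (u : ℂ) (θ : ℝ) :
    |sin (θ - u.arg)| ≤ ‖circleMap 0 r θ - u‖ := by
  have rotate : circleMap 0 r θ - u =
      Complex.exp (u.arg * Complex.I) * (circleMap 0 r (θ - u.arg) - ‖u‖) := by
    nth_rw 1 [← Complex.norm_mul_exp_arg_mul_I u]
    simp only [circleMap, zero_add, Complex.ofReal_sub, mul_sub, sub_mul, Complex.exp_sub]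
    field_simp [Complex.exp_ne_zero]
  calc |sin (θ - u.arg)| ≤ |r * sin (θ - u.arg)| := by
        rw [abs_mul]
        exact le_mul_of_one_le_left (abs_nonneg _) (hr.trans (le_abs_self r))
    _ = |(circleMap 0 r (θ - u.arg) - ‖u‖).im| := by
        simp [circleMap, Complex.exp_ofReal_mul_I_im, -Complex.ofReal_sub]
    _ ≤ ‖circleMap 0 r θ - u‖ := by
        rw [rotate, norm_mul, Complex.norm_exp_ofReal_mul_I, one_mul]
        exact Complex.abs_im_le_norm _

lemma ae_inv_sqrt_norm_circleMap_sub_le {r : ℝ} (hr : 1 ≤ r) (u : ℂ) :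
    ∀ᵐ θ, (√‖circleMap 0 r θ - u‖)⁻¹ ≤ (√|sin (θ - u.arg)|)⁻¹ := by
  have countable_zeros : {θ | sin (θ - u.arg) = 0}.Countable := by
    refine (Set.countable_range fun n : ℤ ↦ n * π + u.arg).mono fun θ hθ ↦ ?_
    obtain ⟨n, hn⟩ := sin_eq_zero_iff.1 hθ
    exact ⟨n, by simp [hn]⟩
  filter_upwards [countable_zeros.ae_notMem volume] with θ hθ
  have : 0 < |sin (θ - u.arg)| := abs_pos.2 hθ
  gcongr
  exact abs_sin_sub_arg_le_norm_circleMap_sub hr u θ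

lemma intervalIntegrable_inv_sqrt_abs_sin_sub (a : ℝ) :
    IntervalIntegrable (fun θ ↦ (√|sin (θ - a)|)⁻¹) volume 0 (2 * π) := by
  simpa using (intervalIntegrable_inv_sqrt_abs_sin (0 - a) (2 * π - a)).comp_sub_right a

lemma circleIntegrable_inv_sqrt_norm_sub {r : ℝ} (hr : 1 ≤ r) (u : ℂ) :
    CircleIntegrable (fun z ↦ (√‖z - u‖)⁻¹) 0 r := by
  refine (intervalIntegrable_inv_sqrt_abs_sin_sub u.arg).mono_fun' (by fun_prop) ?_
  filter_upwards [ae_restrict_of_ae (ae_inv_sqrt_norm_circleMap_sub_le hr u)]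
    with θ hθ
  rwa [norm_of_nonneg (by positivity)]

lemma exists_circleAverage_inv_sqrt_norm_sub_le :
    ∃ C, ∀ r ≥ 1, ∀ u : ℂ, circleAverage (fun z ↦ (√‖z - u‖)⁻¹) 0 r ≤ C := by
  refine ⟨(2 * π)⁻¹ * ∫ θ in 0..2 * π, (√|sin θ|)⁻¹, fun r hr u ↦ ?_⟩
  have periodic : Function.Periodic (fun θ ↦ (√|sin θ|)⁻¹) (2 * π) := fun θ ↦ by simp
  rw [circleAverage_def, smul_eq_mul]
  refine mul_le_mul_of_nonneg_left ?_ (by positivity)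
  calc ∫ θ in 0..2 * π, (√‖circleMap 0 r θ - u‖)⁻¹
      ≤ ∫ θ in 0..2 * π, (√|sin (θ - u.arg)|)⁻¹ :=
        intervalIntegral.integral_mono_ae (by positivity)
          (circleIntegrable_inv_sqrt_norm_sub hr u)
          (intervalIntegrable_inv_sqrt_abs_sin_sub u.arg)
          (ae_inv_sqrt_norm_circleMap_sub_le hr u)
    _ = ∫ θ in (-u.arg)..(-u.arg + 2 * π), (√|sin θ|)⁻¹ := by
        rw [intervalIntegral.integral_comp_sub_right (fun θ ↦ (√|sin θ|)⁻¹)]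
        ring_nf
    _ = ∫ θ in 0..2 * π, (√|sin θ|)⁻¹ := by
        simpa using periodic.intervalIntegral_add_eq (-u.arg) 0

-- Passing to `√x`, which is subadditive and, unlike `x` itself, integrable on circles for
-- `x = ‖∑ D u / (z - u)‖`, replaces the usual appeal to the concavity of `log`.
lemma posLog_le_two_mul_log_add {a x : ℝ} (ha : 1 ≤ a) (hx : 0 ≤ x) :
    log⁺ x ≤ 2 * (log a + √x / a) := by
  have split : log⁺ √x ≤ log a + √x / a := by
    calc log⁺ √x = log⁺ (a * (√x / a)) := by rw [mul_div_cancel₀ _ (by positivity)]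
      _ ≤ log⁺ a + log⁺ (√x / a) := posLog_mul
      _ ≤ log a + √x / a := by
        rw [posLog_eq_log (ha.trans (le_abs_self a))]
        gcongr
        exact max_le (by positivity) (log_le_self (by positivity))
  calc log⁺ x = 2 * log⁺ √x := by
        conv_lhs => rw [← sq_sqrt hx, posLog_pow]
        norm_num
    _ ≤ 2 * (log a + √x / a) := by gcongr

lemma sqrt_add_le_add_sqrt (x y : ℝ) : √(x + y) ≤ √x + √y := by
  rcases le_total x 0 with hx | hx
  · exact (sqrt_le_sqrt (by linarith)).trans (le_add_of_nonneg_left (sqrt_nonneg x))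
  rcases le_total y 0 with hy | hy
  · exact (sqrt_le_sqrt (by linarith)).trans (le_add_of_nonneg_right (sqrt_nonneg y))
  refine sqrt_le_iff.2 ⟨by positivity, ?_⟩
  nlinarith [sq_sqrt hx, sq_sqrt hy, mul_nonneg (sqrt_nonneg x) (sqrt_nonneg y)]

lemma sqrt_sum_le {ι : Type*} (s : Finset ι) (f : ι → ℝ) :
    √(∑ i ∈ s, f i) ≤ ∑ i ∈ s, √(f i) :=
  s.le_sum_of_subadditive _ sqrt_zero.le sqrt_add_le_add_sqrt f

lemma sqrt_norm_sum_div_sub_le (s : Finset ℂ) (D : ℂ → ℤ) (z : ℂ) :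
    √‖∑ u ∈ s, D u / (z - u)‖ ≤ ∑ u ∈ s, |(D u : ℝ)| * (√‖z - u‖)⁻¹ := by
  calc √‖∑ u ∈ s, D u / (z - u)‖ ≤ √(∑ u ∈ s, |(D u : ℝ)| / ‖z - u‖) := by
        gcongr
        exact (norm_sum_le _ _).trans_eq (by simp)
    _ ≤ ∑ u ∈ s, √(|(D u : ℝ)| / ‖z - u‖) := sqrt_sum_le s _
    _ ≤ ∑ u ∈ s, |(D u : ℝ)| * (√‖z - u‖)⁻¹ := by
        gcongr with u
        rw [sqrt_div (abs_nonneg _), div_eq_mul_inv]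
        gcongr
        rw [sqrt_le_self_iff]
        exact_mod_cast (abs_nonneg (D u)).eq_or_lt.imp Eq.symm Int.add_one_le_of_lt

lemma circleIntegrable_sum_mul_inv_sqrt_norm_sub {r : ℝ} (hr : 1 ≤ r) (s : Finset ℂ)
    (a : ℂ → ℝ) : CircleIntegrable (fun z ↦ ∑ u ∈ s, a u * (√‖z - u‖)⁻¹) 0 r := by
  have := CircleIntegrable.sum s fun u _ ↦
    (circleIntegrable_inv_sqrt_norm_sub hr u).const_smul (a := a u)
  simpa [Finset.sum_fn] using! this

lemma circleAverage_const_mul (a : ℝ) (G : ℂ → ℝ) (c : ℂ) (r : ℝ) :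
    circleAverage (fun z ↦ a * G z) c r = a * circleAverage G c r :=
  circleAverage_fun_smul (a := a) (f := G)

lemma circleAverage_const_add_mul {G : ℂ → ℝ} {c : ℂ} {r : ℝ} (hG : CircleIntegrable G c r)
    (a b : ℝ) : circleAverage (fun z ↦ a + b * G z) c r = a + b * circleAverage G c r := by
  have bG_integrable : CircleIntegrable (fun z ↦ b * G z) c r := hG.const_smul
  rw [circleAverage_fun_add (circleIntegrable_const a c r) bG_integrable,
    circleAverage_const, circleAverage_const_mul]

lemma exists_circleAverage_posLog_norm_sum_div_sub_le :
    ∃ C, ∀ r ≥ 1, ∀ (s : Finset ℂ) (D : ℂ → ℤ),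
      circleAverage (fun z ↦ log⁺ ‖∑ u ∈ s, D u / (z - u)‖) 0 r ≤
        2 * log (1 + ∑ u ∈ s, |(D u : ℝ)|) + C := by
  obtain ⟨C, hC⟩ := exists_circleAverage_inv_sqrt_norm_sub_le
  refine ⟨2 * C, fun r hr s D ↦ ?_⟩
  set n := ∑ u ∈ s, |(D u : ℝ)| with hn
  set G : ℂ → ℝ := fun z ↦ ∑ u ∈ s, |(D u : ℝ)| * (√‖z - u‖)⁻¹ with hG
  have n_nonneg : 0 ≤ n := by positivity
  have C_nonneg : 0 ≤ C :=
    (circleAverage_nonneg_of_nonneg fun _ _ ↦ by positivity).trans (hC 1 le_rfl 0)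
  have G_integrable : CircleIntegrable G 0 r := circleIntegrable_sum_mul_inv_sqrt_norm_sub hr s _
  have average_G_le : circleAverage G 0 r ≤ n * C := by
    have term_integrable (u : ℂ) : CircleIntegrable (fun z ↦ |(D u : ℝ)| * (√‖z - u‖)⁻¹) 0 r :=
      (circleIntegrable_inv_sqrt_norm_sub hr u).const_smul
    rw [hG, circleAverage_fun_sum fun u _ ↦ term_integrable u, hn, Finset.sum_mul]
    gcongr with u
    rw [circleAverage_const_mul]
    exact mul_le_mul_of_nonneg_left (hC r hr u) (abs_nonneg _)
  calc circleAverage (fun z ↦ log⁺ ‖∑ u ∈ s, D u / (z - u)‖) 0 r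
      ≤ circleAverage (fun z ↦ 2 * log (1 + n) + 2 / (1 + n) * G z) 0 r := by
        refine circleAverage_mono
          (MeromorphicOn.circleIntegrable_posLog_norm fun z _ ↦ by fun_prop)
          ((circleIntegrable_const _ _ _).add (G_integrable.const_smul (a := 2 / (1 + n))))
          fun z _ ↦ ?_
        calc log⁺ ‖∑ u ∈ s, D u / (z - u)‖
            ≤ 2 * (log (1 + n) + √‖∑ u ∈ s, D u / (z - u)‖ / (1 + n)) :=
              posLog_le_two_mul_log_add (by linarith) (norm_nonneg _)
          _ ≤ 2 * (log (1 + n) + G z / (1 + n)) := by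
              gcongr
              exact sqrt_norm_sum_div_sub_le s D z
          _ = 2 * log (1 + n) + 2 / (1 + n) * G z := by ring
    _ = 2 * log (1 + n) + 2 / (1 + n) * circleAverage G 0 r :=
        circleAverage_const_add_mul G_integrable _ _
    _ ≤ 2 * log (1 + n) + 2 / (1 + n) * (n * C) := by gcongr
    _ ≤ 2 * log (1 + n) + 2 * C := by
        rw [add_le_add_iff_left, div_mul_eq_mul_div, div_le_iff₀ (by positivity)]
        nlinarith

end CircleAverage

/-! ### Logarithmic derivatives of zero-free functions -/

section ZeroFree

open Metric Real

lemma norm_circleAverage_le_of_norm_le {E : Type*} [NormedAddCommGroup E] [NormedSpace ℝ E]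
    {f : ℂ → E} {G : ℂ → ℝ} {c : ℂ} {R : ℝ} (hG : CircleIntegrable G c R)
    (h : ∀ z ∈ sphere c |R|, ‖f z‖ ≤ G z) : ‖circleAverage f c R‖ ≤ circleAverage G c R := by
  rw [circleAverage_def, circleAverage_def, norm_smul, smul_eq_mul, norm_of_nonneg (by positivity)]
  gcongr
  exact intervalIntegral.norm_integral_le_of_norm_le (by positivity)
    (.of_forall fun θ _ ↦ h _ (circleMap_mem_sphere' c R θ)) hG

lemma logDeriv_eq_deriv_of_log_norm_eventuallyEq_re {g F : ℂ → ℂ} {w : ℂ}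
    (hg : AnalyticAt ℂ g w) (hF : AnalyticAt ℂ F w) (g_ne_zero : g w ≠ 0)
    (log_norm_eq : (fun z ↦ log ‖g z‖) =ᶠ[𝓝 w] fun z ↦ (F z).re) :
    logDeriv g w = deriv F w := by
  set h : ℂ → ℂ := fun z ↦ g z * Complex.exp (-F z) with hh
  have h_analytic : AnalyticAt ℂ h w := by fun_prop
  have norm_h_eq_one : ∀ᶠ z in 𝓝 w, ‖h z‖ = 1 := by
    filter_upwards [log_norm_eq, hg.continuousAt.eventually_ne g_ne_zero] with z hz g_ne_zero
    rw [hh, norm_mul, Complex.norm_exp, Complex.neg_re, ← hz, exp_neg,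
      exp_log (norm_pos_iff.2 g_ne_zero), mul_inv_cancel₀ (norm_ne_zero_iff.2 g_ne_zero)]
  have h_eventually_const : ∀ᶠ z in 𝓝 w, h z = h w :=
    Complex.eventually_eq_of_isLocalMax_norm
      (h_analytic.eventually_analyticAt.mono fun z hz ↦ hz.differentiableAt)
      (norm_h_eq_one.mono fun z hz ↦ (hz.trans norm_h_eq_one.self_of_nhds.symm).le)
  have deriv_h : HasDerivAt h (deriv g w * Complex.exp (-F w) +
      g w * (Complex.exp (-F w) * -deriv F w)) w :=
    hg.differentiableAt.hasDerivAt.mul hF.differentiableAt.hasDerivAt.fun_neg.cexp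
  have deriv_h_eq_zero := deriv_h.unique ((hasDerivAt_const w (h w)).congr_of_eventuallyEq
    h_eventually_const)
  rw [logDeriv_apply, div_eq_iff g_ne_zero]
  refine mul_left_cancel₀ (Complex.exp_ne_zero (-F w)) ?_
  linear_combination deriv_h_eq_zero

lemma logDeriv_eq_circleAverage {g : ℂ → ℂ} {R : ℝ} {w : ℂ}
    (hg : AnalyticOnNhd ℂ g (closedBall 0 R)) (g_ne_zero : ∀ z ∈ closedBall 0 R, g z ≠ 0)
    (hw : w ∈ ball 0 R) :
    logDeriv g w = circleAverage (fun ζ ↦ (2 * ζ / (ζ - w) ^ 2) • (log ‖g ζ‖ : ℂ)) 0 R := by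
  have log_integrable : CircleIntegrable (fun ζ ↦ log ‖g ζ‖) 0 R :=
    MeromorphicOn.circleIntegrable_log_norm fun z hz ↦ (hg z <| sphere_subset_closedBall <| by
      rwa [abs_of_pos (pos_of_mem_ball hw)] at hz).meromorphicAt
  have log_integrable' : CircleIntegrable (fun ζ ↦ (log ‖g ζ‖ : ℂ)) 0 R :=
    ⟨log_integrable.1.ofReal, log_integrable.2.ofReal⟩
  rw [← (hasDerivAt_circleAverage_herglotzRieszKernel_smul log_integrable' hw).deriv]
  refine logDeriv_eq_deriv_of_log_norm_eventuallyEq_re (hg w (ball_subset_closedBall hw))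
    (analyticOnNhd_circleAverage_herglotzRieszKernel_smul log_integrable' w hw)
    (g_ne_zero w (ball_subset_closedBall hw)) ?_
  filter_upwards [isOpen_ball.mem_nhds hw] with z hz
  rw [re_circleAverage_herglotzRieszKernel_smul log_integrable hz]
  exact (InnerProductSpace.HarmonicOnNhd.circleAverage_re_herglotzRieszKernel_smul
    (fun x hx ↦ (hg x hx).harmonicAt_log_norm (g_ne_zero x hx)) hz).symm

lemma norm_logDeriv_le_of_ne_zero {g : ℂ → ℂ} {R : ℝ} {w : ℂ}
    (hg : AnalyticOnNhd ℂ g (closedBall 0 R)) (g_ne_zero : ∀ z ∈ closedBall 0 R, g z ≠ 0)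
    (hw : w ∈ ball 0 R) :
    ‖logDeriv g w‖ ≤ 2 * R / (R - ‖w‖) ^ 2 * circleAverage (fun ζ ↦ |log ‖g ζ‖|) 0 R := by
  have R_pos : 0 < R := pos_of_mem_ball hw
  have hwR : 0 < R - ‖w‖ := by simpa using hw
  have abs_log_integrable : CircleIntegrable (fun ζ ↦ |log ‖g ζ‖|) 0 R :=
    (MeromorphicOn.circleIntegrable_log_norm fun z hz ↦
      (hg z (sphere_subset_closedBall (by rwa [abs_of_pos R_pos] at hz))).meromorphicAt).abs
  have kernel_le {ζ : ℂ} (hζ : ζ ∈ sphere 0 R) :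
      ‖2 * ζ / (ζ - w) ^ 2‖ ≤ 2 * R / (R - ‖w‖) ^ 2 := by
    rw [mem_sphere_zero_iff_norm] at hζ
    rw [norm_div, norm_pow, norm_mul, RCLike.norm_ofNat, hζ]
    gcongr
    exact hζ ▸ norm_sub_norm_le ζ w
  rw [logDeriv_eq_circleAverage hg g_ne_zero hw, ← circleAverage_const_mul]
  refine norm_circleAverage_le_of_norm_le abs_log_integrable.const_smul fun ζ hζ ↦ ?_
  rw [norm_smul, Complex.norm_real, norm_eq_abs]
  gcongr
  exact kernel_le (by rwa [abs_of_pos R_pos] at hζ)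

end ZeroFree

/-! ### Counting functions of divisors -/

section IndicatorInv

open MeasureTheory Set

lemma intervalIntegrable_indicator_Ici_inv {s : ℝ} (hs : 0 < s) (r : ℝ) :
    IntervalIntegrable ((Ici s).indicator (·⁻¹)) volume 0 r := by
  have inv_integrableOn : IntegrableOn (·⁻¹) (Ici s ∩ uIoc 0 r) := by
    refine (ContinuousOn.integrableOn_Icc (a := s) (b := max 0 r) ?_).mono_set
      fun t ht ↦ ⟨ht.1, ht.2.2⟩
    exact continuousOn_id.inv₀ fun t ht ↦ (hs.trans_le ht.1).ne'
  rw [intervalIntegrable_iff, IntegrableOn, integrable_indicator_iff measurableSet_Ici]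
  rwa [IntegrableOn, Measure.restrict_restrict measurableSet_Ici]

lemma integral_indicator_Ici_inv {s r : ℝ} (hs : 0 < s) (hsr : s ≤ r) :
    ∫ t in (0 : ℝ)..r, (Ici s).indicator (·⁻¹) t = Real.log (r * s⁻¹) := by
  have inter_eq : Ioc 0 r ∩ Ici s = Icc s r := by
    ext t
    exact ⟨fun ht ↦ ⟨ht.2, ht.1.2⟩, fun ht ↦ ⟨⟨hs.trans_le ht.1, ht.2⟩, ht.1⟩⟩
  rw [intervalIntegral.integral_of_le (hs.le.trans hsr), setIntegral_indicator measurableSet_Ici,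
    inter_eq, integral_Icc_eq_integral_Ioc, ← intervalIntegral.integral_of_le hsr,
    integral_inv_of_pos hs (hs.trans_le hsr), div_eq_mul_inv]

end IndicatorInv

section BallCount

open Function MeasureTheory Metric Real

variable {E : Type*} [NormedAddCommGroup E]

/-- The unintegrated counting function `n(t, D) = ∑_{‖z‖ ≤ t} D z` of a divisor `D`, whose
logarithmic integral is `locallyFinsuppWithin.logCounting D`. -/
noncomputable def ballCount (D : locallyFinsupp E ℤ) (t : ℝ) : ℝ :=
  ∑ᶠ z ∈ closedBall (0 : E) t, (D z : ℝ)

lemma ballCount_zero (D : locallyFinsupp E ℤ) : ballCount D 0 = D 0 := by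
  simp [ballCount]

open Classical in
lemma intervalIntegrable_ballCount_kernel (z : E) (r : ℝ) : IntervalIntegrable
    (fun t ↦ if z = 0 then (0 : ℝ) else (Set.Ici ‖z‖).indicator (·⁻¹) t) volume 0 r := by
  by_cases hz : z = 0
  · simp only [hz, if_true, intervalIntegrable_const]
  · simpa only [hz, if_false] using intervalIntegrable_indicator_Ici_inv (norm_pos_iff.2 hz) r

variable [ProperSpace E] (D : locallyFinsupp E ℤ)

lemma finite_closedBall_inter_support (r : ℝ) : (closedBall 0 r ∩ D.support).Finite :=
  D.locallyFiniteSupport.finite_inter_support_of_isCompact (isCompact_closedBall 0 r)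

/-- The points of the support of a divisor in the closed ball `‖z‖ ≤ r`, as a finite index set for
the sums defining its counting functions. -/
noncomputable def ballSupport (r : ℝ) : Finset E :=
  (finite_closedBall_inter_support D r).toFinset

variable {D} in
lemma mem_ballSupport {r : ℝ} {z : E} : z ∈ ballSupport D r ↔ ‖z‖ ≤ r ∧ D z ≠ 0 := by
  simp [ballSupport]

lemma ballCount_eq_sum {r t : ℝ} (htr : t ≤ r) :
    ballCount D t = ∑ z ∈ ballSupport D r, if ‖z‖ ≤ t then (D z : ℝ) else 0 := by
  rw [ballCount, finsum_mem_def, finsum_eq_sum_of_support_subset (s := ballSupport D r)]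
  · refine Finset.sum_congr rfl fun z _ ↦ ?_
    by_cases hz : ‖z‖ ≤ t <;> simp [hz]
  · intro z hz
    rw [Set.support_indicator] at hz
    exact mem_ballSupport.2 ⟨(mem_closedBall_zero_iff.1 hz.1).trans htr, Int.cast_ne_zero.1 hz.2⟩

lemma logCounting_eq_sum {r : ℝ} (hr : 0 ≤ r) :
    locallyFinsuppWithin.logCounting D r =
      ∑ z ∈ ballSupport D r, (D z : ℝ) * log (r * ‖z‖⁻¹) + D 0 * log r := by
  have mem_of_mem {z : E} (hz : ‖z‖ ≤ r) : z ∈ closedBall 0 |r| := by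
    rwa [mem_closedBall_zero_iff, abs_of_nonneg hr]
  rw [locallyFinsuppWithin.logCounting, AddMonoidHom.coe_mk, ZeroHom.coe_mk,
    finsum_eq_sum_of_support_subset]
  · refine congrArg (· + _) (Finset.sum_congr rfl fun z hz ↦ ?_)
    rw [locallyFinsuppWithin.toClosedBall_eval_within D (mem_of_mem (mem_ballSupport.1 hz).1)]
  · intro z hz
    have hz' : z ∈ closedBall 0 |r| :=
      D.toClosedBall_support_subset_closedBall fun h ↦ hz (by simp [h])
    rw [mem_support, locallyFinsuppWithin.toClosedBall_eval_within D hz'] at hz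
    rw [mem_closedBall_zero_iff, abs_of_nonneg hr] at hz'
    exact mem_ballSupport.2 ⟨hz', Int.cast_ne_zero.1 (left_ne_zero_of_mul hz)⟩

open Classical in
lemma ballCount_sub_div_eq_sum {r t : ℝ} (ht : 0 ≤ t) (htr : t ≤ r) :
    (ballCount D t - D 0) / t = ∑ z ∈ ballSupport D r,
      (D z : ℝ) * (if z = 0 then 0 else (Set.Ici ‖z‖).indicator (·⁻¹) t) := by
  have D_zero_eq : (D 0 : ℝ) = ∑ z ∈ ballSupport D r,
      if z = 0 then (D z : ℝ) else 0 := by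
    simp +contextual [mem_ballSupport, ht.trans htr]
  rw [ballCount_eq_sum D htr, D_zero_eq, ← Finset.sum_sub_distrib, Finset.sum_div]
  refine Finset.sum_congr rfl fun z _ ↦ ?_
  split_ifs <;> simp_all [div_eq_mul_inv]

lemma intervalIntegrable_ballCount_sub_div {r : ℝ} (hr : 0 ≤ r) :
    IntervalIntegrable (fun t ↦ (ballCount D t - D 0) / t) volume 0 r := by
  refine (IntervalIntegrable.sum (ballSupport D r) fun z _ ↦
    (intervalIntegrable_ballCount_kernel z r).const_mul (D z : ℝ)).congr fun t ht ↦ ?_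
  rw [Set.uIoc_of_le hr] at ht
  rw [ballCount_sub_div_eq_sum D ht.1.le ht.2, Finset.sum_apply]

lemma logCounting_eq_integral {r : ℝ} (hr : 0 ≤ r) : locallyFinsuppWithin.logCounting D r =
    (∫ t in (0 : ℝ)..r, (ballCount D t - D 0) / t) + D 0 * log r := by
  classical
  rw [logCounting_eq_sum D hr]
  refine congrArg (· + _) ?_
  calc ∑ z ∈ ballSupport D r, (D z : ℝ) * log (r * ‖z‖⁻¹)
    _ = ∑ z ∈ ballSupport D r, ∫ t in (0 : ℝ)..r,
          (D z : ℝ) * (if z = 0 then 0 else (Set.Ici ‖z‖).indicator (·⁻¹) t) := by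
      refine Finset.sum_congr rfl fun z hz ↦ ?_
      have norm_le := (mem_ballSupport.1 hz).1
      rw [intervalIntegral.integral_const_mul]
      by_cases hz : z = 0
      · simp [hz]
      · simp only [hz, if_false, integral_indicator_Ici_inv (norm_pos_iff.2 hz) norm_le]
    _ = ∫ t in (0 : ℝ)..r, (ballCount D t - D 0) / t := by
      rw [← intervalIntegral.integral_finsetSum fun z _ ↦
        (intervalIntegrable_ballCount_kernel z r).const_mul (D z : ℝ)]
      refine intervalIntegral.integral_congr fun t ht ↦ ?_
      rw [Set.uIcc_of_le hr] at ht
      exact (ballCount_sub_div_eq_sum D ht.1 ht.2).symm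

lemma intervalIntegrable_ballCount_div {s r : ℝ} (hs : 0 < s) (hr : 0 < r) :
    IntervalIntegrable (fun t ↦ ballCount D t / t) volume s r := by
  have sub_integrable := (intervalIntegrable_ballCount_sub_div D hs.le).symm.trans
    (intervalIntegrable_ballCount_sub_div D hr.le)
  have inv_integrable : IntervalIntegrable (·⁻¹) volume s r :=
    intervalIntegral.intervalIntegrable_inv (fun t ht ↦ ((lt_min hs hr).trans_le ht.1).ne')
      continuousOn_id
  refine (sub_integrable.add (inv_integrable.const_mul (D 0 : ℝ))).congr fun t _ ↦ ?_
  ring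

lemma logCounting_sub_logCounting {s r : ℝ} (hs : 0 < s) (hr : 0 < r) :
    locallyFinsuppWithin.logCounting D r - locallyFinsuppWithin.logCounting D s =
      ∫ t in s..r, ballCount D t / t := by
  have const_integral : ∫ t in s..r, (D 0 : ℝ) * t⁻¹ = D 0 * log r - D 0 * log s := by
    rw [intervalIntegral.integral_const_mul, integral_inv_of_pos hs hr, log_div hr.ne' hs.ne']
    ring
  have const_integrable : IntervalIntegrable (fun t ↦ (D 0 : ℝ) * t⁻¹) volume s r :=
    (intervalIntegral.intervalIntegrable_inv (fun t ht ↦ ((lt_min hs hr).trans_le ht.1).ne')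
      continuousOn_id).const_mul _
  have sub_integral : ∫ t in s..r, (ballCount D t - D 0) / t =
      (∫ t in s..r, ballCount D t / t) - ∫ t in s..r, (D 0 : ℝ) * t⁻¹ := by
    rw [← intervalIntegral.integral_sub (intervalIntegrable_ballCount_div D hs hr) const_integrable]
    simp only [div_eq_mul_inv, sub_mul]
  have adjacent := intervalIntegral.integral_interval_sub_left
    (intervalIntegrable_ballCount_sub_div D hr.le) (intervalIntegrable_ballCount_sub_div D hs.le)
  rw [logCounting_eq_integral D hr.le, logCounting_eq_integral D hs.le]
  linear_combination adjacent + sub_integral - const_integral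

variable {D}

lemma ballCount_mono (hD : 0 ≤ D) : Monotone (ballCount D) := by
  intro s t hst
  rw [ballCount_eq_sum D hst, ballCount_eq_sum D le_rfl]
  refine Finset.sum_le_sum fun z _ ↦ ?_
  have : (0 : ℝ) ≤ D z := Int.cast_nonneg (hD z)
  split_ifs <;> grind

lemma ballCount_abs (D : locallyFinsupp E ℤ) (r : ℝ) :
    ballCount |D| r = ∑ z ∈ ballSupport D r, |(D z : ℝ)| := by
  have abs_apply (z : E) : |D| z = |D z| := rfl
  have support_eq : ballSupport |D| r = ballSupport D r := by
    ext z
    rw [mem_ballSupport, mem_ballSupport, abs_apply, abs_ne_zero]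
  rw [ballCount_eq_sum _ le_rfl, support_eq]
  refine Finset.sum_congr rfl fun z hz ↦ ?_
  rw [if_pos (mem_ballSupport.1 hz).1, abs_apply, Int.cast_abs]

lemma ballCount_mul_log_two_le_logCounting (hD : 0 ≤ D) {r : ℝ} (hr : 1 ≤ r) :
    ballCount D r * log 2 ≤ locallyFinsuppWithin.logCounting D (2 * r) := by
  have r_pos : 0 < r := by positivity
  calc ballCount D r * log 2
    _ = ∫ t in r..2 * r, ballCount D r / t := by
      simp only [div_eq_mul_inv]
      rw [intervalIntegral.integral_const_mul, integral_inv_of_pos r_pos (by positivity),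
        mul_div_cancel_right₀ _ r_pos.ne']
    _ ≤ ∫ t in r..2 * r, ballCount D t / t := by
      refine intervalIntegral.integral_mono_on (by linarith) ?_
        (intervalIntegrable_ballCount_div D r_pos (by positivity)) fun t ht ↦ ?_
      · exact (continuousOn_const.div continuousOn_id fun t ht ↦
          ((lt_min r_pos (by positivity)).trans_le ht.1).ne').intervalIntegrable
      · have := ballCount_mono hD ht.1
        have : 0 < t := r_pos.trans_le ht.1
        gcongr
    _ = locallyFinsuppWithin.logCounting D (2 * r) - locallyFinsuppWithin.logCounting D r :=
      (logCounting_sub_logCounting D r_pos (by positivity)).symm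
    _ ≤ locallyFinsuppWithin.logCounting D (2 * r) :=
      sub_le_self _ (locallyFinsuppWithin.logCounting_nonneg hD hr)

lemma eventually_le_logCounting_of_eventually_le_ballCount {c : ℝ} (hc : 0 < c) (k : ℕ)
    (h : ∀ᶠ t in atTop, c * t ^ (k + 1) ≤ ballCount D t) :
    ∀ᶠ r in atTop, c / (2 * (k + 1)) * r ^ (k + 1) ≤ locallyFinsuppWithin.logCounting D r := by
  obtain ⟨s, s_pos, hs⟩ : ∃ s > 0, ∀ t ≥ s, c * t ^ (k + 1) ≤ ballCount D t :=
    ((eventually_gt_atTop 0).and (eventually_forall_ge_atTop.2 h)).exists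
  have le_sub_logCounting {r : ℝ} (hr : s ≤ r) : c / (k + 1) * (r ^ (k + 1) - s ^ (k + 1)) ≤
      locallyFinsuppWithin.logCounting D r - locallyFinsuppWithin.logCounting D s := by
    rw [logCounting_sub_logCounting D s_pos (s_pos.trans_le hr)]
    calc c / (k + 1) * (r ^ (k + 1) - s ^ (k + 1))
      _ = ∫ t in s..r, c * t ^ k := by
        rw [intervalIntegral.integral_const_mul, integral_pow]
        ring
      _ ≤ ∫ t in s..r, ballCount D t / t := by
        refine intervalIntegral.integral_mono_on hr
          ((continuous_const.mul (continuous_pow k)).intervalIntegrable _ _)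
          (intervalIntegrable_ballCount_div D s_pos (s_pos.trans_le hr)) fun t ht ↦ ?_
        rw [le_div_iff₀ (s_pos.trans_le ht.1), mul_assoc, ← pow_succ]
        exact hs t ht.1
  have pow_tendsto : Tendsto (fun r : ℝ ↦ c / (2 * (k + 1)) * r ^ (k + 1)) atTop atTop :=
    (tendsto_pow_atTop k.succ_ne_zero).const_mul_atTop (by positivity)
  filter_upwards [eventually_ge_atTop s, pow_tendsto.eventually_ge_atTop
    (c / (k + 1) * s ^ (k + 1) - locallyFinsuppWithin.logCounting D s)] with r hr r_large
  have := le_sub_logCounting hr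
  have : c / (k + 1) * r ^ (k + 1) = 2 * (c / (2 * (k + 1)) * r ^ (k + 1)) := by field_simp
  linarith

end BallCount

/-! ### The lemma on the logarithmic derivative -/

section LogarithmicDerivative

open Metric Real MeromorphicOn ValueDistribution

variable {F : ℂ → ℂ}

lemma abs_log_eq_posLog_add_posLog_inv (x : ℝ) : |log x| = log⁺ x + log⁺ x⁻¹ := by
  linarith [posLog_sub_posLog_inv (x := x), half_mul_log_add_log_abs (x := x)]

lemma finprod_sub_zpow_divisor_eq (hF : Meromorphic F) (R : ℝ) :
    (∏ᶠ u, (· - u) ^ divisor F (closedBall 0 R) u : ℂ → ℂ) =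
      ∏ u ∈ ballSupport (divisor F Set.univ) R, (· - u) ^ divisor F Set.univ u := by
  rw [finprod_eq_prod_of_mulSupport_subset (s := ballSupport (divisor F Set.univ) R)]
  · refine Finset.prod_congr rfl fun u hu ↦ ?_
    have hu := mem_closedBall_zero_iff.2 (mem_ballSupport.1 hu).1
    rw [divisor_apply hF.meromorphicOn hu, divisor_apply hF.meromorphicOn (Set.mem_univ u)]
  · intro u hu
    have divisor_ne_zero : divisor F (closedBall 0 R) u ≠ 0 := by
      refine fun h ↦ hu ?_
      simp only [h, zpow_zero]
    have mem_ball := (divisor F (closedBall 0 R)).supportWithinDomain divisor_ne_zero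
    rw [divisor_apply hF.meromorphicOn mem_ball] at divisor_ne_zero
    exact mem_ballSupport.2 ⟨mem_closedBall_zero_iff.1 mem_ball,
      by rwa [divisor_apply hF.meromorphicOn (Set.mem_univ u)]⟩

lemma exists_eventuallyEq_prod_zpow_mul (hF : Meromorphic F)
    (order_ne_top : ∀ z, meromorphicOrderAt F z ≠ ⊤) (R : ℝ) :
    ∃ g : ℂ → ℂ, AnalyticOnNhd ℂ g (closedBall 0 R) ∧ (∀ z ∈ closedBall 0 R, g z ≠ 0) ∧
      F =ᶠ[codiscreteWithin (closedBall 0 R)]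
        (∏ u ∈ ballSupport (divisor F Set.univ) R, (· - u) ^ divisor F Set.univ u) * g := by
  obtain ⟨g, hg, g_ne_zero, F_eq⟩ := hF.meromorphicOn.extract_zeros_poles (U := closedBall 0 R)
    (fun u ↦ order_ne_top u) ((divisor F _).finiteSupport (isCompact_closedBall 0 R))
  refine ⟨g, hg, fun z hz ↦ g_ne_zero ⟨z, hz⟩, ?_⟩
  rwa [← finprod_sub_zpow_divisor_eq hF]

lemma logDeriv_eventuallyEq_sum_add {g : ℂ → ℂ} {s : Finset ℂ} {D : ℂ → ℤ} {R : ℝ}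
    (hg : AnalyticOnNhd ℂ g (closedBall 0 R)) (g_ne_zero : ∀ z ∈ closedBall 0 R, g z ≠ 0)
    (F_eq : F =ᶠ[codiscreteWithin (closedBall 0 R)] (∏ u ∈ s, (· - u) ^ D u) * g) :
    logDeriv F =ᶠ[codiscreteWithin (ball 0 R)] fun z ↦ ∑ u ∈ s, D u / (z - u) + logDeriv g z := by
  refine (logDeriv_congr_codiscreteWithin isOpen_ball
    (F_eq.filter_mono (codiscreteWithin_mono ball_subset_closedBall))).trans ?_
  filter_upwards [self_mem_codiscreteWithin (ball 0 R),
    codiscreteWithin_mono (Set.subset_univ _) s.finite_toSet.compl_mem_codiscrete] with z hz hzs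
  have z_sub_ne_zero (u) (hu : u ∈ s) : z - u ≠ 0 := fun h ↦ hzs (by rwa [sub_eq_zero.1 h])
  have z_mem := ball_subset_closedBall hz
  have zpow_ne_zero (u) (hu : u ∈ s) : (z - u) ^ D u ≠ 0 := zpow_ne_zero _ (z_sub_ne_zero u hu)
  have zpow_differentiableAt (u) (hu : u ∈ s) : DifferentiableAt ℂ (fun z ↦ (z - u) ^ D u) z :=
    DifferentiableAt.zpow (by fun_prop) (.inl (z_sub_ne_zero u hu))
  have prod_eq : (∏ u ∈ s, (· - u) ^ D u : ℂ → ℂ) = fun z ↦ ∏ u ∈ s, (z - u) ^ D u := by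
    ext z
    simp only [Finset.prod_apply, Pi.pow_apply]
  rw [prod_eq, Pi.mul_def, logDeriv_mul z (Finset.prod_ne_zero_iff.2 zpow_ne_zero)
    (g_ne_zero z z_mem) (.fun_finsetProd zpow_differentiableAt) (hg z z_mem).differentiableAt,
    logDeriv_prod (f := fun u z ↦ (z - u) ^ D u) zpow_ne_zero zpow_differentiableAt]
  congr 1
  refine Finset.sum_congr rfl fun u _ ↦ ?_
  rw [logDeriv_fun_zpow (f := (· - u)) (by fun_prop), logDeriv_apply, deriv_sub_const, deriv_id'',
    mul_one_div]

lemma log_norm_eventuallyEq_sum_add {g : ℂ → ℂ} {s : Finset ℂ} {D : ℂ → ℤ} {U : Set ℂ}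
    (g_ne_zero : ∀ z ∈ U, g z ≠ 0)
    (F_eq : F =ᶠ[codiscreteWithin U] (∏ u ∈ s, (· - u) ^ D u) * g) :
    (log ‖F ·‖) =ᶠ[codiscreteWithin U] fun z ↦ ∑ u ∈ s, D u * log ‖z - u‖ + log ‖g z‖ := by
  filter_upwards [F_eq, self_mem_codiscreteWithin U,
    codiscreteWithin_mono (Set.subset_univ _) s.finite_toSet.compl_mem_codiscrete] with z hz hzU hzs
  have zpow_ne_zero (u) (hu : u ∈ s) : ‖z - u‖ ^ D u ≠ 0 :=
    zpow_ne_zero _ (norm_ne_zero_iff.2 fun h ↦ hzs (by rwa [sub_eq_zero.1 h]))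
  simp only [hz, Pi.mul_apply, Finset.prod_apply, Pi.pow_apply, norm_mul, norm_prod, norm_zpow]
  rw [log_mul (Finset.prod_ne_zero_iff.2 zpow_ne_zero) (norm_ne_zero_iff.2 (g_ne_zero z hzU)),
    log_prod zpow_ne_zero]
  simp only [log_zpow]

lemma circleAverage_abs_log_norm_sub_le {R : ℝ} (hR : 1 ≤ R) {u : ℂ} (hu : ‖u‖ ≤ R) :
    circleAverage (fun z ↦ |log ‖z - u‖|) 0 R ≤ 2 * log (2 * R) := by
  have sub_meromorphicOn : MeromorphicOn (· - u) (sphere 0 |R|) :=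
    fun z _ ↦ (by fun_prop : AnalyticAt ℂ (· - u) z).meromorphicAt
  have abs_log_eq : (fun z ↦ |log ‖z - u‖|) = fun z ↦ 2 * log⁺ ‖z - u‖ - log ‖z - u‖ := by
    ext z
    linarith [half_mul_log_add_log_abs (x := ‖z - u‖)]
  have posLog_le : circleAverage (fun z ↦ log⁺ ‖z - u‖) 0 R ≤ log (2 * R) := by
    refine circleAverage_mono_on_of_le_circle sub_meromorphicOn.circleIntegrable_posLog_norm ?_
    intro z hz
    rw [← posLog_eq_log (x := 2 * R) (by rw [abs_of_nonneg] <;> linarith)]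
    refine posLog_le_posLog (norm_nonneg _) ((norm_sub_le _ _).trans ?_)
    rw [mem_sphere_zero_iff_norm.1 hz, abs_of_nonneg] <;> linarith
  have log_average : circleAverage (fun z ↦ log ‖z - u‖) 0 R = log R :=
    circleAverage_log_norm_sub_const_of_mem_closedBall
      (mem_closedBall_zero_iff.2 (hu.trans (le_abs_self R)))
  have two_mul_posLog_integrable : CircleIntegrable (fun z ↦ 2 * log⁺ ‖z - u‖) 0 R :=
    sub_meromorphicOn.circleIntegrable_posLog_norm.const_smul
  rw [abs_log_eq, circleAverage_fun_sub two_mul_posLog_integrable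
    sub_meromorphicOn.circleIntegrable_log_norm, circleAverage_const_mul, log_average]
  linarith [log_nonneg hR]

lemma circleAverage_abs_log_norm_eq (hF : Meromorphic F) (r : ℝ) :
    circleAverage (fun z ↦ |log ‖F z‖|) 0 r = proximity F ⊤ r + proximity F⁻¹ ⊤ r := by
  rw [proximity_top, proximity_top,
    ← circleAverage_add hF.meromorphicOn.circleIntegrable_posLog_norm
      hF.inv.meromorphicOn.circleIntegrable_posLog_norm]
  refine circleAverage_congr_sphere fun z _ ↦ ?_
  rw [Pi.add_apply, Pi.inv_apply, norm_inv, abs_log_eq_posLog_add_posLog_inv]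

lemma circleAverage_abs_sub_sum_mul_le {ι : Type*} {s : Finset ι} {G : ℂ → ℝ} {H : ι → ℂ → ℝ}
    {c : ℂ} {r : ℝ} (hG : CircleIntegrable G c r) (hH : ∀ i, CircleIntegrable (H i) c r)
    (a : ι → ℝ) :
    circleAverage (fun z ↦ |G z - ∑ i ∈ s, a i * H i z|) c r ≤
      circleAverage (fun z ↦ |G z|) c r + ∑ i ∈ s, |a i| * circleAverage (fun z ↦ |H i z|) c r := by
  have summand_integrable (i : ι) : CircleIntegrable (fun z ↦ |a i| * |H i z|) c r :=
    (hH i).abs.const_smul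
  have sum_integrable : CircleIntegrable (fun z ↦ ∑ i ∈ s, a i * H i z) c r := by
    simpa [Finset.sum_fn] using! CircleIntegrable.sum s fun i _ ↦ (hH i).const_smul (a := a i)
  have abs_sum_integrable : CircleIntegrable (fun z ↦ ∑ i ∈ s, |a i| * |H i z|) c r := by
    simpa [Finset.sum_fn] using! CircleIntegrable.sum s fun i _ ↦ summand_integrable i
  calc circleAverage (fun z ↦ |G z - ∑ i ∈ s, a i * H i z|) c r
      ≤ circleAverage (fun z ↦ |G z| + ∑ i ∈ s, |a i| * |H i z|) c r := by
        refine circleAverage_mono (hG.sub sum_integrable).abs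
          (hG.abs.add abs_sum_integrable) fun z _ ↦ (abs_sub _ _).trans ?_
        gcongr
        exact (Finset.abs_sum_le_sum_abs _ _).trans_eq (by simp only [abs_mul])
    _ = circleAverage (fun z ↦ |G z|) c r +
          ∑ i ∈ s, |a i| * circleAverage (fun z ↦ |H i z|) c r := by
        rw [circleAverage_fun_add (f₁ := (|G ·|)) hG.abs abs_sum_integrable,
          circleAverage_fun_sum fun i _ ↦ summand_integrable i]
        simp only [circleAverage_const_mul]

lemma circleAverage_abs_log_norm_le_of_eventuallyEq_prod {g : ℂ → ℂ} {s : Finset ℂ} {D : ℂ → ℤ}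
    {R : ℝ} (hR : 1 ≤ R) (hs : ∀ u ∈ s, ‖u‖ ≤ R) (hF : Meromorphic F)
    (g_ne_zero : ∀ z ∈ closedBall 0 R, g z ≠ 0)
    (F_eq : F =ᶠ[codiscreteWithin (closedBall 0 R)] (∏ u ∈ s, (· - u) ^ D u) * g) :
    circleAverage (fun z ↦ |log ‖g z‖|) 0 R ≤
      circleAverage (fun z ↦ |log ‖F z‖|) 0 R + 2 * log (2 * R) * ∑ u ∈ s, |(D u : ℝ)| := by
  have log_g_eq : (fun z ↦ |log ‖g z‖|) =ᶠ[codiscreteWithin (sphere 0 |R|)]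
      fun z ↦ |log ‖F z‖ - ∑ u ∈ s, D u * log ‖z - u‖| := by
    have sphere_subset : sphere (0 : ℂ) |R| ⊆ closedBall 0 R := by
      rw [abs_of_nonneg (by linarith)]
      exact sphere_subset_closedBall
    filter_upwards [(log_norm_eventuallyEq_sum_add g_ne_zero F_eq).filter_mono
      (codiscreteWithin_mono sphere_subset)] with z hz
    rw [hz, add_sub_cancel_left]
  rw [circleAverage_congr_codiscreteWithin log_g_eq (by linarith)]
  refine (circleAverage_abs_sub_sum_mul_le hF.meromorphicOn.circleIntegrable_log_norm
    (fun u ↦ MeromorphicOn.circleIntegrable_log_norm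
      fun z _ ↦ (by fun_prop : AnalyticAt ℂ (· - u) z).meromorphicAt) _).trans ?_
  rw [Finset.mul_sum]
  refine add_le_add_right (Finset.sum_le_sum fun u hu ↦ ?_) _
  rw [mul_comm]
  exact mul_le_mul_of_nonneg_right (circleAverage_abs_log_norm_sub_le hR (hs u hu)) (abs_nonneg _)

lemma proximity_le_of_eventuallyEq_add {A G : ℂ → ℂ} {r M : ℝ} (hF : Meromorphic F)
    (hA : Meromorphic A) (hr : r ≠ 0)
    (F_eq : F =ᶠ[codiscreteWithin (sphere 0 |r|)] fun z ↦ A z + G z)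
    (G_le : ∀ z ∈ sphere 0 |r|, ‖G z‖ ≤ M) :
    proximity F ⊤ r ≤ proximity A ⊤ r + log⁺ M + log 2 := by
  have posLog_eq : (log⁺ ‖F ·‖) =ᶠ[codiscreteWithin (sphere 0 |r|)] fun z ↦ log⁺ ‖A z + G z‖ :=
    F_eq.fun_comp fun w ↦ log⁺ ‖w‖
  have A_integrable := hA.meromorphicOn.circleIntegrable_posLog_norm (c := 0) (R := r)
  have const_integrable := circleIntegrable_const (log⁺ M + log 2) 0 r
  rw [proximity_top, proximity_top, circleAverage_congr_codiscreteWithin posLog_eq hr, add_assoc,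
    ← circleAverage_const (log⁺ M + log 2) 0 r,
    ← circleAverage_fun_add A_integrable const_integrable]
  refine circleAverage_mono (hF.meromorphicOn.circleIntegrable_posLog_norm.congr_codiscreteWithin
    posLog_eq) (A_integrable.add const_integrable) fun z hz ↦ ?_
  linarith [posLog_norm_add_le (A z) (G z), posLog_le_posLog (norm_nonneg _) (G_le z hz)]

lemma norm_logDeriv_le_four_mul_circleAverage {g : ℂ → ℂ} {r : ℝ} (hr : 1 ≤ r)
    (hg : AnalyticOnNhd ℂ g (closedBall 0 (2 * r)))
    (g_ne_zero : ∀ z ∈ closedBall 0 (2 * r), g z ≠ 0) {z : ℂ} (hz : ‖z‖ = r) :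
    ‖logDeriv g z‖ ≤ 4 * circleAverage (fun ζ ↦ |log ‖g ζ‖|) 0 (2 * r) := by
  refine (norm_logDeriv_le_of_ne_zero hg g_ne_zero (mem_ball_zero_iff.2 (by linarith))).trans ?_
  refine mul_le_mul_of_nonneg_right ?_ (circleAverage_nonneg_of_nonneg fun _ _ ↦ abs_nonneg _)
  rw [hz, div_le_iff₀ (by nlinarith)]
  nlinarith

/-- The sum `T(r, F) + T(r, 1 / F)`, which controls the size and the zeros and poles of `F`
simultaneously. -/
noncomputable def characteristicSum (F : ℂ → ℂ) (r : ℝ) : ℝ :=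
  characteristic F ⊤ r + characteristic F⁻¹ ⊤ r

lemma circleAverage_abs_log_norm_le_characteristicSum (hF : Meromorphic F) {r : ℝ} (hr : 1 ≤ r) :
    circleAverage (fun z ↦ |log ‖F z‖|) 0 r ≤ characteristicSum F r := by
  rw [circleAverage_abs_log_norm_eq hF, characteristicSum, characteristic, characteristic]
  exact add_le_add (le_add_of_nonneg_right (logCounting_nonneg hr))
    (le_add_of_nonneg_right (logCounting_nonneg hr))

lemma ballCount_abs_divisor_le (F : ℂ → ℂ) {r : ℝ} (hr : 1 ≤ r) :
    ballCount |divisor F Set.univ| r ≤ 2 * characteristicSum F (2 * r) := by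
  have logCounting_le : Function.locallyFinsuppWithin.logCounting |divisor F Set.univ| (2 * r) ≤
      characteristicSum F (2 * r) := by
    rw [← posPart_add_negPart, map_add, ← logCounting_zero, ← logCounting_top, ← logCounting_inv,
      characteristicSum, characteristic, characteristic, Pi.add_apply, Pi.add_apply, Pi.add_apply]
    have proximity_F_nonneg : 0 ≤ proximity F ⊤ (2 * r) := proximity_nonneg _
    have proximity_inv_nonneg : 0 ≤ proximity F⁻¹ ⊤ (2 * r) := proximity_nonneg _
    linarith
  have ballCount_nonneg : 0 ≤ ballCount |divisor F Set.univ| r := by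
    rw [ballCount_abs]
    positivity
  nlinarith [ballCount_mul_log_two_le_logCounting (abs_nonneg (divisor F Set.univ)) hr,
    log_two_gt_d9]

lemma exists_proximity_logDeriv_le : ∃ C, ∀ F : ℂ → ℂ, Meromorphic F →
    (∀ z, meromorphicOrderAt F z ≠ ⊤) → ∀ r ≥ 1,
      proximity (logDeriv F) ⊤ r ≤ C + 2 * log (1 + 2 * characteristicSum F (4 * r)) +
        log⁺ (4 * (characteristicSum F (2 * r) +
          4 * log (4 * r) * characteristicSum F (4 * r))) := by
  obtain ⟨C, hC⟩ := exists_circleAverage_posLog_norm_sum_div_sub_le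
  refine ⟨C + log 2, fun F hF order_ne_top r hr ↦ ?_⟩
  obtain ⟨g, hg, g_ne_zero, F_eq⟩ := exists_eventuallyEq_prod_zpow_mul hF order_ne_top (2 * r)
  set s := ballSupport (divisor F Set.univ) (2 * r)
  have sum_le : ∑ u ∈ s, |(divisor F Set.univ u : ℝ)| ≤ 2 * characteristicSum F (4 * r) := by
    rw [← ballCount_abs, (by ring : 4 * r = 2 * (2 * r))]
    exact ballCount_abs_divisor_le F (by linarith)
  have average_le : circleAverage (fun z ↦ |log ‖g z‖|) 0 (2 * r) ≤
      characteristicSum F (2 * r) + 4 * log (4 * r) * characteristicSum F (4 * r) := by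
    have := circleAverage_abs_log_norm_le_of_eventuallyEq_prod (by linarith)
      (fun u hu ↦ (mem_ballSupport.1 hu).1) hF g_ne_zero F_eq
    rw [← mul_assoc, (by norm_num : (2 : ℝ) * 2 = 4)] at this
    nlinarith [log_nonneg (by linarith : 1 ≤ 4 * r),
      circleAverage_abs_log_norm_le_characteristicSum hF (by linarith : 1 ≤ 2 * r)]
  have logDeriv_g_le : ∀ z ∈ sphere 0 |r|, ‖logDeriv g z‖ ≤
      4 * (characteristicSum F (2 * r) + 4 * log (4 * r) * characteristicSum F (4 * r)) := by
    intro z hz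
    rw [abs_of_nonneg (by linarith), mem_sphere_zero_iff_norm] at hz
    linarith [norm_logDeriv_le_four_mul_circleAverage hr hg g_ne_zero hz]
  have sphere_subset : sphere (0 : ℂ) |r| ⊆ ball 0 (2 * r) := by
    rw [abs_of_nonneg (by linarith)]
    exact sphere_subset_ball (by linarith)
  have sum_meromorphic :
      Meromorphic fun z ↦ ∑ u ∈ s, (divisor F Set.univ u : ℂ) / (z - u) := fun z ↦ by
    fun_prop
  have log_sum_le := log_le_log (by positivity) (add_le_add_right sum_le 1)
  have := proximity_le_of_eventuallyEq_add hF.logDeriv sum_meromorphic (by linarith)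
    ((logDeriv_eventuallyEq_sum_add hg g_ne_zero F_eq).filter_mono
      (codiscreteWithin_mono sphere_subset)) logDeriv_g_le
  rw [proximity_top (f := fun z ↦ ∑ u ∈ s, _)] at this
  linarith [hC r hr s (divisor F Set.univ)]

end LogarithmicDerivative

/-! ### Growth of meromorphic functions -/

section Growth

open MeromorphicOn Real ValueDistribution

lemma eventually_codiscrete_iff {X : Type*} [TopologicalSpace X] {P : X → Prop} :
    (∀ᶠ x in codiscrete X, P x) ↔ ∀ x, ∀ᶠ y in 𝓝[≠] x, P y := by
  simp [Filter.Eventually, codiscrete, mem_codiscreteWithin_iff_forall_mem_nhdsNE]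

lemma pow_isBigO_pow {k l : ℕ} (hkl : k ≤ l) : (· ^ k : ℝ → ℝ) =O[atTop] (· ^ l : ℝ → ℝ) :=
  (isBigO_pow_pow_cobounded_of_le hkl).mono IsOrderBornology.atTop_le_cobounded

lemma one_isBigO_pow (k : ℕ) : (1 : ℝ → ℝ) =O[atTop] (· ^ k : ℝ → ℝ) := by
  simpa only [pow_zero] using! pow_isBigO_pow k.zero_le

lemma log_isBigO_pow {k : ℕ} (hk : k ≠ 0) : log =O[atTop] (· ^ k : ℝ → ℝ) :=
  isLittleO_log_id_atTop.isBigO.trans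
    (by simpa only [pow_one] using! pow_isBigO_pow (Nat.one_le_iff_ne_zero.2 hk))

lemma isBigO_posLog_comp_of_isBigO_pow {S : ℝ → ℝ} {k : ℕ} (hS : S =O[atTop] (· ^ k)) :
    (fun r ↦ log⁺ (S r)) =O[atTop] log := by
  obtain ⟨C, hC⟩ := hS.bound
  have bound_isBigO : (fun r ↦ log⁺ C + k * log r) =O[atTop] log :=
    isLittleO_const_log_atTop.isBigO.add (isBigO_const_mul_self _ _ _)
  refine IsBigO.trans (.of_bound' ?_) bound_isBigO
  filter_upwards [hC, eventually_ge_atTop 1] with r hr r_ge_one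
  rw [norm_eq_abs, norm_eq_abs, abs_of_nonneg posLog_nonneg]
  calc log⁺ (S r) = log⁺ |S r| := (posLog_abs _).symm
    _ ≤ log⁺ (C * r ^ k) := by
        refine posLog_le_posLog (abs_nonneg _) (hr.trans_eq ?_)
        rw [norm_of_nonneg (by positivity)]
    _ ≤ log⁺ C + log⁺ (r ^ k) := posLog_mul
    _ = log⁺ C + k * log r := by
        rw [posLog_pow, posLog_eq_log (x := r) (r_ge_one.trans (le_abs_self r))]
    _ ≤ |log⁺ C + k * log r| := le_abs_self _

lemma isBigO_pow_comp_const_mul {S : ℝ → ℝ} {k : ℕ} {c : ℝ} (hc : 0 < c)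
    (hS : S =O[atTop] (· ^ k)) : (fun r ↦ S (c * r)) =O[atTop] (· ^ k : ℝ → ℝ) := by
  refine (hS.comp_tendsto (tendsto_id.const_mul_atTop hc)).trans ?_
  simp only [Function.comp_def, id_eq, mul_pow]
  exact isBigO_const_mul_self _ _ _

/-- Meromorphic functions on `ℂ` of finite order, i.e. whose Nevanlinna characteristic grows at most
polynomially. -/
def HasFiniteOrder (f : ℂ → ℂ) : Prop :=
  Meromorphic f ∧ ∃ k : ℕ, characteristic f ⊤ =O[atTop] (· ^ k : ℝ → ℝ)

/-- Meromorphic functions on `ℂ` with Nevanlinna proximity function `m(r, f) = O(φ(r))` as `r → ∞`;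
for `φ = log` these are small in the sense of the lemma on the logarithmic derivative. -/
def HasProximityIsBigO (f : ℂ → ℂ) (φ : ℝ → ℝ) : Prop :=
  Meromorphic f ∧ proximity f ⊤ =O[atTop] φ

variable {f g : ℂ → ℂ} {φ ψ : ℝ → ℝ}

lemma characteristicSum_isBigO (hf : Meromorphic f) {k : ℕ}
    (hk : characteristic f ⊤ =O[atTop] (· ^ k : ℝ → ℝ)) :
    characteristicSum f =O[atTop] (· ^ k : ℝ → ℝ) := by
  have sub_isBigO :=
    (isBigO_characteristic_sub_characteristic_inv hf).trans (one_isBigO_pow k)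
  refine ((hk.const_mul_left 2).sub sub_isBigO).congr_left fun r ↦ ?_
  rw [characteristicSum, Pi.sub_apply]
  ring

lemma isBigO_proximity_logDeriv_of_order_ne_top (hf : Meromorphic f)
    (order_ne_top : ∀ z, meromorphicOrderAt f z ≠ ⊤) {k : ℕ}
    (hk : characteristic f ⊤ =O[atTop] (· ^ k : ℝ → ℝ)) :
    proximity (logDeriv f) ⊤ =O[atTop] log := by
  obtain ⟨C, hC⟩ := exists_proximity_logDeriv_le
  have hS := characteristicSum_isBigO hf hk
  have S_two := isBigO_pow_comp_const_mul two_pos hS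
  have S_four := isBigO_pow_comp_const_mul four_pos hS
  have first_isBigO : (fun r ↦ 1 + 2 * characteristicSum f (4 * r)) =O[atTop] (· ^ k : ℝ → ℝ) :=
    (one_isBigO_pow k).add (S_four.const_mul_left 2)
  have second_isBigO : (fun r ↦ 4 * (characteristicSum f (2 * r) +
      4 * log (4 * r) * characteristicSum f (4 * r))) =O[atTop] (· ^ (k + 1) : ℝ → ℝ) := by
    have log_isBigO : (fun r ↦ 4 * log (4 * r)) =O[atTop] (· ^ 1 : ℝ → ℝ) :=
      (isBigO_pow_comp_const_mul four_pos (log_isBigO_pow one_ne_zero)).const_mul_left 4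
    refine ((S_two.trans (pow_isBigO_pow (Nat.le_add_right k 1))).add
      ((log_isBigO.mul S_four).congr_right fun r ↦ ?_)).const_mul_left 4
    rw [pow_one, ← pow_succ']
  have bound_isBigO := ((isLittleO_const_log_atTop (c := C)).isBigO.add
    ((isBigO_posLog_comp_of_isBigO_pow first_isBigO).const_mul_left 2)).add
    (isBigO_posLog_comp_of_isBigO_pow second_isBigO)
  refine IsBigO.trans (.of_bound' ?_) bound_isBigO
  filter_upwards [eventually_ge_atTop 1] with r hr
  rw [norm_of_nonneg (proximity_nonneg r)]
  refine ((hC f hf order_ne_top r hr).trans ?_).trans (le_norm_self _)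
  gcongr
  exact le_max_right _ _

theorem HasFiniteOrder.hasProximityIsBigO_logDeriv (hf : HasFiniteOrder f) :
    HasProximityIsBigO (logDeriv f) log := by
  obtain ⟨hf, k, hk⟩ := hf
  refine ⟨hf.logDeriv, ?_⟩
  by_cases order_ne_top : ∀ z, meromorphicOrderAt f z ≠ ⊤
  · exact isBigO_proximity_logDeriv_of_order_ne_top hf order_ne_top hk
  have f_eq_zero : f =ᶠ[codiscrete ℂ] 0 := by
    refine eventually_codiscrete_iff.2 fun z ↦ meromorphicOrderAt_eq_top_iff.1 ?_
    by_contra order_ne_top_at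
    exact order_ne_top (hf.exists_meromorphicOrderAt_ne_top_iff_forall.1 ⟨z, order_ne_top_at⟩)
  have : proximity (logDeriv f) ⊤ =ᶠ[atTop] 0 := by
    filter_upwards [eventually_ne_atTop 0] with r hr
    rw [proximity_congr_codiscrete (logDeriv_congr_codiscrete f_eq_zero) hr]
    have logDeriv_zero : logDeriv (0 : ℂ → ℂ) = fun _ ↦ 0 := by
      ext z
      simp [logDeriv]
    rw [logDeriv_zero, proximity_const, norm_zero, posLog_zero, Pi.zero_apply]
  exact this.trans_isBigO (isBigO_zero _ _)

namespace HasProximityIsBigO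

lemma trans (hf : HasProximityIsBigO f φ) (hφ : φ =O[atTop] ψ) : HasProximityIsBigO f ψ :=
  ⟨hf.1, hf.2.trans hφ⟩

lemma congr (hf : HasProximityIsBigO f φ) (hg : Meromorphic g) (h : f =ᶠ[codiscrete ℂ] g) :
    HasProximityIsBigO g φ := by
  refine ⟨hg, hf.2.congr' ?_ .rfl⟩
  filter_upwards [eventually_ne_atTop 0] with r hr using proximity_congr_codiscrete h hr

lemma add (hf : HasProximityIsBigO f φ) (hg : HasProximityIsBigO g φ)
    (hφ : (1 : ℝ → ℝ) =O[atTop] φ) : HasProximityIsBigO (f + g) φ := by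
  refine ⟨hf.1.add hg.1, IsBigO.trans (.of_bound' (.of_forall fun r ↦ ?_))
    ((hf.2.add hg.2).add (hφ.const_mul_left (log 2)))⟩
  rw [norm_of_nonneg (proximity_nonneg r)]
  simpa using (proximity_add_top_le hf.1 hg.1 r).trans (le_norm_self _)

lemma mul (hf : HasProximityIsBigO f φ) (hg : HasProximityIsBigO g φ) :
    HasProximityIsBigO (f * g) φ := by
  refine ⟨hf.1.mul hg.1, IsBigO.trans (.of_bound' (.of_forall fun r ↦ ?_)) (hf.2.add hg.2)⟩
  rw [norm_of_nonneg (proximity_nonneg r)]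
  exact (proximity_mul_top_le hf.1 hg.1 r).trans (le_norm_self _)

lemma const (c : ℂ) (hφ : (1 : ℝ → ℝ) =O[atTop] φ) : HasProximityIsBigO (fun _ ↦ c) φ :=
  ⟨.const c, (hφ.const_mul_left (log⁺ ‖c‖)).congr_left fun r ↦ by simp⟩

lemma id : HasProximityIsBigO (fun z ↦ z) log := by
  refine ⟨fun z ↦ by fun_prop, .of_bound' ?_⟩
  filter_upwards [eventually_ge_atTop 1] with r hr
  rw [proximity_top, circleAverage_congr_sphere (f₂ := fun _ ↦ log r), circleAverage_const]
  intro z hz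
  have norm_eq : ‖z‖ = r := by simpa [abs_of_nonneg (zero_le_one.trans hr)] using hz
  simp [norm_eq, posLog_eq_log (hr.trans (le_abs_self r))]

lemma neg (hf : HasProximityIsBigO f φ) : HasProximityIsBigO (-f) φ := by
  refine ⟨hf.1.neg, hf.2.congr_left fun r ↦ ?_⟩
  simp only [proximity_top, Pi.neg_apply, norm_neg]

lemma sub (hf : HasProximityIsBigO f φ) (hg : HasProximityIsBigO g φ)
    (hφ : (1 : ℝ → ℝ) =O[atTop] φ) : HasProximityIsBigO (f - g) φ := by
  simpa only [sub_eq_add_neg] using hf.add hg.neg hφ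

lemma of_pow {n : ℕ} (hn : n ≠ 0) (hf : Meromorphic f) (h : HasProximityIsBigO (f ^ n) φ) :
    HasProximityIsBigO f φ := by
  refine ⟨hf, (h.2.const_mul_left (n : ℝ)⁻¹).congr_left fun r ↦ ?_⟩
  simp [hn]

end HasProximityIsBigO

namespace HasFiniteOrder

lemma of_isBigO {k : ℕ} (hf : Meromorphic f) (proximity_isBigO : proximity f ⊤ =O[atTop] (· ^ k))
    (logCounting_isBigO : logCounting f ⊤ =O[atTop] (· ^ k : ℝ → ℝ)) : HasFiniteOrder f :=
  ⟨hf, k, proximity_isBigO.add logCounting_isBigO⟩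

lemma exists_isBigO (hf : HasFiniteOrder f) :
    ∃ k : ℕ, proximity f ⊤ =O[atTop] (· ^ k) ∧ logCounting f ⊤ =O[atTop] (· ^ k : ℝ → ℝ) := by
  obtain ⟨-, k, hk⟩ := hf
  refine ⟨k, .trans (.of_bound' ?_) hk, .trans (.of_bound' ?_) hk⟩ <;>
    filter_upwards [eventually_ge_atTop 1] with r hr
  · rw [norm_of_nonneg (proximity_nonneg r), norm_of_nonneg (characteristic_nonneg hr)]
    exact le_add_of_nonneg_right (logCounting_nonneg hr)
  · rw [norm_of_nonneg (logCounting_nonneg hr), norm_of_nonneg (characteristic_nonneg hr)]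
    exact le_add_of_nonneg_left (proximity_nonneg r)

lemma const_mul (hf : HasFiniteOrder f) (c : ℂ) : HasFiniteOrder (fun z ↦ c * f z) := by
  obtain ⟨k, proximity_isBigO, logCounting_isBigO⟩ := hf.exists_isBigO
  have proximity_isBigO_mul : HasProximityIsBigO (fun z ↦ c * f z) (· ^ k) :=
    (HasProximityIsBigO.const c (one_isBigO_pow k)).mul ⟨hf.1, proximity_isBigO⟩
  refine .of_isBigO proximity_isBigO_mul.1 proximity_isBigO_mul.2 ?_
  rcases eq_or_ne c 0 with rfl | hc
  · simp only [zero_mul, logCounting_const]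
    exact isBigO_zero _ _
  have divisor_eq : divisor (fun z ↦ c * f z) Set.univ = divisor f Set.univ := by
    ext z
    rw [proximity_isBigO_mul.1.meromorphicOn.divisor_apply (Set.mem_univ z),
      hf.1.meromorphicOn.divisor_apply (Set.mem_univ z),
      fun_meromorphicOrderAt_mul (.const c z) (hf.1 z), meromorphicOrderAt_const, if_neg hc,
      zero_add]
  simpa only [logCounting_top, divisor_eq] using logCounting_isBigO

lemma add (hf : HasFiniteOrder f) (hg : HasFiniteOrder g) : HasFiniteOrder (f + g) := by
  obtain ⟨hf, k, hk⟩ := hf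
  obtain ⟨hg, l, hl⟩ := hg
  refine ⟨hf.add hg, max k l, IsBigO.trans (.of_bound' ?_)
    (((hk.trans (pow_isBigO_pow (le_max_left k l))).add
      (hl.trans (pow_isBigO_pow (le_max_right k l)))).add
      ((one_isBigO_pow _).const_mul_left (log 2)))⟩
  filter_upwards [eventually_ge_atTop 1] with r hr
  rw [norm_of_nonneg (characteristic_nonneg hr)]
  simpa using (characteristic_add_top_le hf hg hr).trans (le_norm_self _)

lemma sub (hf : HasFiniteOrder f) (hg : HasFiniteOrder g) : HasFiniteOrder (f - g) := by
  simpa [sub_eq_add_neg, Pi.add_def] using hf.add (hg.const_mul (-1))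

lemma id : HasFiniteOrder (fun z ↦ z) := by
  refine .of_isBigO HasProximityIsBigO.id.1
    (HasProximityIsBigO.id.2.trans (log_isBigO_pow one_ne_zero)) (k := 1) ?_
  have logCounting_id : logCounting (fun z : ℂ ↦ z) ⊤ = 0 := by
    rw [← zero_add (fun z : ℂ ↦ z), logCounting_add_analyticOn (f := 0) (.const 0) analyticOn_id,
      logCounting_const_zero]
  exact logCounting_id ▸ isBigO_zero _ _

end HasFiniteOrder

lemma deriv_eventuallyEq_mul_logDeriv (hf : Meromorphic f) :
    deriv f =ᶠ[codiscrete ℂ] f * logDeriv f := by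
  refine eventually_codiscrete_iff.2 fun z ↦ ?_
  rcases (hf z).eventually_eq_zero_or_eventually_ne_zero with f_eq_zero | f_ne_zero
  · have f_eventuallyEq : f =ᶠ[𝓝[≠] z] fun _ ↦ 0 := f_eq_zero
    filter_upwards [f_eq_zero, f_eventuallyEq.nhdsNE_deriv] with w hw deriv_eq
    simp [hw, deriv_eq]
  · filter_upwards [f_ne_zero] with w hw
    rw [Pi.mul_apply, logDeriv_apply, mul_div_cancel₀ _ hw]

lemma HasProximityIsBigO.deriv (hf : HasProximityIsBigO f φ) (finiteOrder : HasFiniteOrder f)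
    (hφ : log =O[atTop] φ) : HasProximityIsBigO (deriv f) φ :=
  (hf.mul (finiteOrder.hasProximityIsBigO_logDeriv.trans hφ)).congr hf.1.deriv
    (deriv_eventuallyEq_mul_logDeriv hf.1).symm

end Growth

/-! ### The Nevanlinna characteristic -/

section Characteristic

open Metric MeromorphicOn Real ValueDistribution

variable {f : ℂ → ℂ}

lemma exists_tendsto_pow_mul_iff {z₀ : ℂ} (hf : MeromorphicAt f z₀) (k : ℕ) :
    (∃ c, Tendsto (fun z ↦ (z - z₀) ^ k * f z) (𝓝[≠] z₀) (𝓝 c)) ↔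
      0 ≤ (k : WithTop ℤ) + meromorphicOrderAt f z₀ := by
  have pow_meromorphicAt : MeromorphicAt (fun z ↦ (z - z₀) ^ k) z₀ := by fun_prop
  rw [← fun_meromorphicOrderAt_pow_id_sub_const (x := z₀) (n := k),
    ← meromorphicOrderAt_mul pow_meromorphicAt hf,
    ← tendsto_nhds_iff_meromorphicOrderAt_nonneg (pow_meromorphicAt.mul hf)]
  rfl

lemma poleMult_eq_toNat (hf : Meromorphic f) (z : ℂ) :
    poleMult f z = (-divisor f Set.univ z).toNat := by
  simp only [poleMult, exists_tendsto_pow_mul_iff (hf z)]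
  rw [hf.meromorphicOn.divisor_apply (Set.mem_univ z)]
  cases meromorphicOrderAt f z with
  | top => simp
  | coe n =>
    have mem_iff (k : ℕ) : (0 : WithTop ℤ) ≤ k + (n : WithTop ℤ) ↔ (-n).toNat ≤ k := by
      rw [Int.toNat_le, neg_le_iff_add_nonneg]
      exact_mod_cast Iff.rfl
    simp only [mem_iff]
    exact csInf_Ici

lemma nPoles_eq_ballCount (hf : Meromorphic f) :
    nPoles f = ballCount (divisor f Set.univ)⁻ := by
  ext t
  refine finsum_congr fun z ↦ finsum_congr fun _ ↦ ?_
  rw [poleMult_eq_toNat hf, ← Int.cast_natCast, Int.toNat_eq_max]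
  rfl

lemma countingN_eq_logCounting (hf : Meromorphic f) {r : ℝ} (hr : 0 ≤ r) :
    countingN f r = logCounting f ⊤ r := by
  rw [countingN, nPoles_eq_ballCount hf, logCounting_top, logCounting_eq_integral _ hr,
    ballCount_zero]

lemma proximity_eq_proximity_top (f : ℂ → ℂ) (r : ℝ) :
    _root_.proximity f r = ValueDistribution.proximity f ⊤ r := by
  simp [_root_.proximity, proximity_top, circleAverage_def, circleMap, logPlus, posLog_def]

lemma nevT_eq_characteristic (hf : Meromorphic f) {r : ℝ} (hr : 0 ≤ r) :
    nevT f r = characteristic f ⊤ r := by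
  rw [nevT, proximity_eq_proximity_top, countingN_eq_logCounting hf hr]
  rfl

lemma hasFiniteOrder_of_nevT_le (hf : Meromorphic f) {C : ℝ} {k : ℕ}
    (hC : ∀ r, 1 ≤ r → nevT f r ≤ C * r ^ k) : HasFiniteOrder f := by
  refine ⟨hf, k, .of_bound C ?_⟩
  filter_upwards [eventually_ge_atTop 1] with r hr
  rw [norm_of_nonneg (characteristic_nonneg hr), norm_of_nonneg (by positivity)]
  exact nevT_eq_characteristic hf (zero_le_one.trans hr) ▸ hC r hr

end Characteristic

/-! ### Local analysis at a point -/

section MeromorphicOrder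

variable {𝕜 : Type*} [NontriviallyNormedField 𝕜] [CompleteSpace 𝕜]
  {f g φ κ : 𝕜 → 𝕜} {u : 𝕜}

lemma meromorphicOrderAt_deriv_add_mul_add [CharZero 𝕜] (hf : MeromorphicAt f u)
    (hφ : AnalyticAt 𝕜 φ u) (hκ : AnalyticAt 𝕜 κ u) {m : ℤ} (hm : m < 0)
    (order_eq : meromorphicOrderAt f u = m) :
    meromorphicOrderAt (deriv f + (φ * f + κ)) u = ↑(m - 1) := by
  have order_deriv : meromorphicOrderAt (deriv f) u = ↑(m - 1) :=
    meromorphicOrderAt_deriv_eq_sub_one (by exact_mod_cast hm.ne) order_eq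
  have mul_meromorphicAt := hφ.meromorphicAt.mul hf
  have le_order : (m : WithTop ℤ) ≤ meromorphicOrderAt (φ * f + κ) u := by
    refine le_trans (le_min ?_ ?_) (meromorphicOrderAt_add mul_meromorphicAt hκ.meromorphicAt)
    · rw [meromorphicOrderAt_mul hφ.meromorphicAt hf, order_eq]
      exact le_add_of_nonneg_left hφ.meromorphicOrderAt_nonneg
    · exact le_trans (by exact_mod_cast hm.le) hκ.meromorphicOrderAt_nonneg
  rw [meromorphicOrderAt_add_eq_left_of_lt (mul_meromorphicAt.add hκ.meromorphicAt), order_deriv]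
  rw [order_deriv]
  exact lt_of_lt_of_le (by exact_mod_cast sub_one_lt m) le_order

lemma two_mul_meromorphicOrderAt_add_one [CharZero 𝕜] (hf : MeromorphicAt f u)
    (hg : MeromorphicAt g u) (hφ : AnalyticAt 𝕜 φ u) (hκ : AnalyticAt 𝕜 κ u) {c : 𝕜} (hc : c ≠ 0)
    (h : ∀ᶠ z in 𝓝[≠] u, deriv f z + (φ z * f z + κ z) = c * g z ^ 2)
    (order_neg : meromorphicOrderAt f u < 0) :
    (2 : ℤ) * meromorphicOrderAt g u + 1 = meromorphicOrderAt f u := by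
  obtain ⟨m, hm⟩ := WithTop.ne_top_iff_exists.1 (order_neg.trans_le le_top).ne
  have hm_neg : m < 0 := by exact_mod_cast hm ▸ order_neg
  have order_eq := meromorphicOrderAt_deriv_add_mul_add hf hφ hκ hm_neg hm.symm
  have order_const : meromorphicOrderAt (fun _ ↦ c) u = 0 :=
    (tendsto_ne_zero_iff_meromorphicOrderAt_eq_zero (.const c u)).1 ⟨c, hc, tendsto_const_nhds⟩
  have eventuallyEq : deriv f + (φ * f + κ) =ᶠ[𝓝[≠] u] (fun _ ↦ c) * g ^ 2 := h
  rw [meromorphicOrderAt_congr eventuallyEq, meromorphicOrderAt_mul (.const c u) (hg.pow 2),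
    order_const, zero_add, meromorphicOrderAt_pow hg] at order_eq
  rw [← hm, ← sub_add_cancel m 1, WithTop.coe_add, ← order_eq]
  rfl

lemma tendsto_sub_mul_logDeriv (hf : MeromorphicAt f u) {k : ℤ}
    (order_eq : meromorphicOrderAt f u = k) :
    Tendsto (fun z ↦ (z - u) * logDeriv f z) (𝓝[≠] u) (𝓝 k) := by
  obtain ⟨g, hg, hg0, hfg⟩ := (meromorphicOrderAt_eq_int_iff hf).1 order_eq
  have hcont : ContinuousAt (fun z ↦ k + (z - u) * (deriv g z / g z)) u := by
    have := hg.deriv.continuousAt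
    have := hg.continuousAt
    fun_prop (disch := assumption)
  have htendsto : Tendsto (fun z ↦ k + (z - u) * (deriv g z / g z)) (𝓝[≠] u) (𝓝 k) := by
    simpa using hcont.tendsto.mono_left (nhdsWithin_le_nhds (s := {u}ᶜ))
  refine htendsto.congr' ?_
  filter_upwards [logDeriv_congr_nhdsNE hfg, self_mem_nhdsWithin,
    hg.eventually_analyticAt.filter_mono nhdsWithin_le_nhds,
    (hg.continuousAt.eventually_ne hg0).filter_mono nhdsWithin_le_nhds]
    with z logDeriv_eq hz hgz hgz0
  have hzu : z - u ≠ 0 := sub_ne_zero.2 hz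
  have sub_differentiableAt : DifferentiableAt 𝕜 (fun w ↦ w - u) z := by fun_prop
  simp only [logDeriv_eq, smul_eq_mul]
  rw [logDeriv_mul (f := fun w ↦ (w - u) ^ k) z (zpow_ne_zero k hzu) hgz0
    (sub_differentiableAt.zpow (.inl hzu)) hgz.differentiableAt,
    logDeriv_fun_zpow sub_differentiableAt]
  simp only [logDeriv_apply, deriv_sub_const_fun, deriv_id'']
  field_simp

end MeromorphicOrder

section Residue

variable {f : ℂ → ℂ} {u : ℂ}

lemma isPole_iff_meromorphicOrderAt_neg (hf : MeromorphicAt f u) :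
    IsPole f u ↔ meromorphicOrderAt f u < 0 := by
  rw [← tendsto_cobounded_iff_meromorphicOrderAt_neg hf, IsPole, tendsto_norm_atTop_iff_cobounded]

lemma hasResidue_zero_of_meromorphicOrderAt_nonneg (hf : MeromorphicAt f u)
    (order_nonneg : 0 ≤ meromorphicOrderAt f u) : HasResidue f u 0 := by
  obtain ⟨c, hc⟩ := (tendsto_nhds_iff_meromorphicOrderAt_nonneg hf).2 order_nonneg
  have sub_tendsto : Tendsto (fun z ↦ z - u) (𝓝[≠] u) (𝓝 0) :=
    tendsto_sub_nhds_zero_iff.2 nhdsWithin_le_nhds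
  simpa [HasResidue] using sub_tendsto.mul hc

lemma exists_hasResidue_of_meromorphicOrderAt_eq_neg_one (hf : MeromorphicAt f u)
    (order_eq : meromorphicOrderAt f u = (-1 : ℤ)) : ∃ a ≠ 0, HasResidue f u a := by
  refine ⟨meromorphicTrailingCoeffAt f u,
    hf.meromorphicTrailingCoeffAt_ne_zero (order_eq ▸ WithTop.coe_ne_top), ?_⟩
  refine hf.tendsto_nhds_meromorphicTrailingCoeffAt.congr fun z ↦ ?_
  simp [order_eq]

lemma HasResidue.tendsto_sub_sq_mul_deriv {a : ℂ} (residue_eq : HasResidue f u a)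
    (hf : MeromorphicAt f u) (order_eq : meromorphicOrderAt f u = (-1 : ℤ)) :
    Tendsto (fun z ↦ (z - u) ^ 2 * deriv f z) (𝓝[≠] u) (𝓝 (-a)) := by
  have hmul := residue_eq.mul (tendsto_sub_mul_logDeriv hf order_eq)
  rw [Int.cast_neg, Int.cast_one, mul_neg_one] at hmul
  refine hmul.congr' ?_
  have order_ne_top : meromorphicOrderAt f u ≠ ⊤ := order_eq ▸ WithTop.coe_ne_top
  filter_upwards [(meromorphicOrderAt_ne_top_iff_eventually_ne_zero hf).1 order_ne_top] with z hz
  rw [logDeriv_apply]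
  field_simp

end Residue

/-! ### Poles of solutions of the Hamiltonian system -/

namespace IsHamSolution

variable {α β : ℂ} {p q : ℂ → ℂ}

lemma meromorphic_fst (h : IsHamSolution α β p q) : Meromorphic p := meromorphicOn_univ.1 h.1

lemma meromorphic_snd (h : IsHamSolution α β p q) : Meromorphic q := meromorphicOn_univ.1 h.2.1

lemma hasDerivAt_fst (h : IsHamSolution α β p q) {z : ℂ} (hp : AnalyticAt ℂ p z)
    (hq : AnalyticAt ℂ q z) : HasDerivAt p (-q z ^ 2 - z * p z - α) z :=
  (h.2.2 z hp hq).1 ▸ hp.differentiableAt.hasDerivAt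

lemma hasDerivAt_snd (h : IsHamSolution α β p q) {z : ℂ} (hp : AnalyticAt ℂ p z)
    (hq : AnalyticAt ℂ q z) : HasDerivAt q (p z ^ 2 + z * q z + β) z :=
  (h.2.2 z hp hq).2 ▸ hq.differentiableAt.hasDerivAt

lemma eventually_analyticAt (h : IsHamSolution α β p q) :
    ∀ᶠ z in codiscrete ℂ, AnalyticAt ℂ p z ∧ AnalyticAt ℂ q z :=
  eventually_codiscrete_iff.2 fun u ↦
    (h.meromorphic_fst u).eventually_analyticAt.and (h.meromorphic_snd u).eventually_analyticAt

lemma eventually_deriv_eq (h : IsHamSolution α β p q) :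
    ∀ᶠ z in codiscrete ℂ, deriv p z = -q z ^ 2 - z * p z - α ∧
      deriv q z = p z ^ 2 + z * q z + β :=
  h.eventually_analyticAt.mono fun z hz ↦ h.2.2 z hz.1 hz.2

lemma meromorphicOrderAt_nonneg_or_eq_neg_one (h : IsHamSolution α β p q) (u : ℂ) :
    (0 ≤ meromorphicOrderAt p u ∧ 0 ≤ meromorphicOrderAt q u) ∨
      (meromorphicOrderAt p u = (-1 : ℤ) ∧ meromorphicOrderAt q u = (-1 : ℤ)) := by
  have hderiv := eventually_codiscrete_iff.1 h.eventually_deriv_eq u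
  have order_snd := two_mul_meromorphicOrderAt_add_one (φ := fun z ↦ z) (κ := fun _ ↦ α)
    (h.meromorphic_fst u) (h.meromorphic_snd u) (by fun_prop) (by fun_prop) (c := -1) (by norm_num)
    (hderiv.mono fun z hz ↦ by rw [hz.1]; ring)
  have order_fst := two_mul_meromorphicOrderAt_add_one (φ := fun z ↦ -z) (κ := fun _ ↦ -β)
    (h.meromorphic_snd u) (h.meromorphic_fst u) (by fun_prop) (by fun_prop) one_ne_zero
    (hderiv.mono fun z hz ↦ by rw [hz.2]; ring)
  generalize meromorphicOrderAt p u = m at *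
  generalize meromorphicOrderAt q u = n at *
  cases m <;> cases n
  case coe.coe => norm_cast at *; omega
  all_goals simp_all

lemma residue_relations (h : IsHamSolution α β p q) {u a b : ℂ}
    (order_fst : meromorphicOrderAt p u = (-1 : ℤ)) (order_snd : meromorphicOrderAt q u = (-1 : ℤ))
    (residue_fst : HasResidue p u a) (residue_snd : HasResidue q u b) :
    a = b ^ 2 ∧ b = -a ^ 2 := by
  have hderiv := eventually_codiscrete_iff.1 h.eventually_deriv_eq u
  have sub_tendsto : Tendsto (fun z ↦ z - u) (𝓝[≠] u) (𝓝 0) :=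
    tendsto_sub_nhds_zero_iff.2 nhdsWithin_le_nhds
  have id_tendsto : Tendsto (fun z ↦ z) (𝓝[≠] u) (𝓝 u) := nhdsWithin_le_nhds
  have tendsto_fst : Tendsto (fun z ↦ (z - u) ^ 2 * deriv p z) (𝓝[≠] u)
      (𝓝 (-b ^ 2 - 0 * u * a - 0 ^ 2 * α)) := by
    refine (((residue_snd.pow 2).neg.sub ((sub_tendsto.mul id_tendsto).mul residue_fst)).sub
      ((sub_tendsto.pow 2).mul_const α)).congr' (hderiv.mono fun z hz ↦ ?_)
    simp only [hz.1]
    ring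
  have tendsto_snd : Tendsto (fun z ↦ (z - u) ^ 2 * deriv q z) (𝓝[≠] u)
      (𝓝 (a ^ 2 + 0 * u * b + 0 ^ 2 * β)) := by
    refine (((residue_fst.pow 2).add ((sub_tendsto.mul id_tendsto).mul residue_snd)).add
      ((sub_tendsto.pow 2).mul_const β)).congr' (hderiv.mono fun z hz ↦ ?_)
    simp only [hz.2]
    ring
  have fst_eq := tendsto_nhds_unique tendsto_fst
    (residue_fst.tendsto_sub_sq_mul_deriv (h.meromorphic_fst u) order_fst)
  have snd_eq := tendsto_nhds_unique tendsto_snd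
    (residue_snd.tendsto_sub_sq_mul_deriv (h.meromorphic_snd u) order_snd)
  exact ⟨by linear_combination fst_eq, by linear_combination snd_eq⟩

theorem exists_hasResidue (h : IsHamSolution α β p q) (u : ℂ) :
    ∃ a, HasResidue p u a ∧ HasResidue q u (-a ^ 2) ∧
      (a = 0 ∧ ¬IsPole p u ∨ a ^ 3 = 1 ∧ IsPole p u) := by
  rw [isPole_iff_meromorphicOrderAt_neg (h.meromorphic_fst u)]
  rcases h.meromorphicOrderAt_nonneg_or_eq_neg_one u with
    ⟨fst_nonneg, snd_nonneg⟩ | ⟨order_fst, order_snd⟩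
  · refine ⟨0, hasResidue_zero_of_meromorphicOrderAt_nonneg (h.meromorphic_fst u) fst_nonneg, ?_,
      .inl ⟨rfl, fst_nonneg.not_gt⟩⟩
    simpa using hasResidue_zero_of_meromorphicOrderAt_nonneg (h.meromorphic_snd u) snd_nonneg
  obtain ⟨a, ha, residue_fst⟩ :=
    exists_hasResidue_of_meromorphicOrderAt_eq_neg_one (h.meromorphic_fst u) order_fst
  obtain ⟨b, -, residue_snd⟩ :=
    exists_hasResidue_of_meromorphicOrderAt_eq_neg_one (h.meromorphic_snd u) order_snd
  obtain ⟨a_eq, b_eq⟩ := h.residue_relations order_fst order_snd residue_fst residue_snd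
  refine ⟨a, residue_fst, b_eq ▸ residue_snd, .inr ⟨mul_left_cancel₀ ha ?_, ?_⟩⟩
  · rw [b_eq] at a_eq
    linear_combination -a_eq
  · rw [order_fst]
    decide

end IsHamSolution

/-! ### Finite order of the second component -/

namespace IsHamSolution

open MeromorphicOn ValueDistribution

variable {α β : ℂ} {p q : ℂ → ℂ}

lemma negPart_divisor_snd (h : IsHamSolution α β p q) :
    (divisor q Set.univ)⁻ = (divisor p Set.univ)⁻ := by
  ext z
  rw [Function.locallyFinsuppWithin.negPart_apply, Function.locallyFinsuppWithin.negPart_apply,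
    h.meromorphic_fst.meromorphicOn.divisor_apply (Set.mem_univ z),
    h.meromorphic_snd.meromorphicOn.divisor_apply (Set.mem_univ z)]
  rcases h.meromorphicOrderAt_nonneg_or_eq_neg_one z with
    ⟨fst_nonneg, snd_nonneg⟩ | ⟨order_fst, order_snd⟩
  · rw [negPart_eq_zero.2 (WithTop.untop₀_nonneg.2 fst_nonneg),
      negPart_eq_zero.2 (WithTop.untop₀_nonneg.2 snd_nonneg)]
  · rw [order_fst, order_snd]

lemma hasProximityIsBigO_snd (h : IsHamSolution α β p q) (hp : HasFiniteOrder p) {φ : ℝ → ℝ}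
    (proximity_fst : HasProximityIsBigO p φ) (hφ : Real.log =O[atTop] φ) :
    HasProximityIsBigO q φ := by
  have one_isBigO : (1 : ℝ → ℝ) =O[atTop] φ := Real.isLittleO_const_log_atTop.isBigO.trans hφ
  have proximity_rhs : HasProximityIsBigO (-deriv p - (fun z ↦ z) * p - fun _ ↦ α) φ :=
    (((proximity_fst.deriv hp hφ).neg.sub ((HasProximityIsBigO.id.trans hφ).mul proximity_fst)
      one_isBigO).sub (.const α one_isBigO) one_isBigO)
  refine .of_pow two_ne_zero h.meromorphic_snd
    (proximity_rhs.congr (fun z ↦ (h.meromorphic_snd z).pow 2)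
      (h.eventually_deriv_eq.mono fun z hz ↦ ?_))
  simp only [Pi.sub_apply, Pi.neg_apply, Pi.mul_apply, Pi.pow_apply, hz.1]
  ring

lemma hasFiniteOrder_snd (h : IsHamSolution α β p q) (hp : HasFiniteOrder p) :
    HasFiniteOrder q := by
  obtain ⟨k, proximity_isBigO, logCounting_isBigO⟩ := hp.exists_isBigO
  have pow_isBigO := pow_isBigO_pow k.le_succ
  refine .of_isBigO (k := k + 1) h.meromorphic_snd
    (h.hasProximityIsBigO_snd hp ⟨h.meromorphic_fst, proximity_isBigO.trans pow_isBigO⟩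
      (log_isBigO_pow k.succ_ne_zero)).2 ?_
  rw [logCounting_top, h.negPart_divisor_snd, ← logCounting_top]
  exact logCounting_isBigO.trans pow_isBigO

end IsHamSolution

/-! ### Darboux polynomial -/

/-- The Darboux polynomial `ρ² p + ρ q - z` of the Hamiltonian system along `(p, q)`: for
`ρ³ = 1` and `ρ² α - ρ β + 1 = 0` its zero set is invariant under the flow. -/
def darbouxForm (ρ : ℂ) (p q : ℂ → ℂ) : ℂ → ℂ := fun z ↦ ρ ^ 2 * p z + ρ * q z - z

/-- The cofactor of `darbouxForm ρ p q`, which for `ρ² α - ρ β + 1 = 0` is its logarithmic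
derivative. -/
def darbouxCofactor (ρ : ℂ) (p q : ℂ → ℂ) : ℂ → ℂ := fun z ↦ ρ ^ 2 * p z - ρ * q z

namespace IsHamSolution

open MeromorphicOn ValueDistribution

variable {α β ρ : ℂ} {p q : ℂ → ℂ}

lemma hasFiniteOrder_darbouxForm (h : IsHamSolution α β p q) (hp : HasFiniteOrder p) (ρ : ℂ) :
    HasFiniteOrder (darbouxForm ρ p q) :=
  ((hp.const_mul (ρ ^ 2)).add ((h.hasFiniteOrder_snd hp).const_mul ρ)).sub .id

lemma hasFiniteOrder_darbouxCofactor (h : IsHamSolution α β p q) (hp : HasFiniteOrder p) (ρ : ℂ) :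
    HasFiniteOrder (darbouxCofactor ρ p q) :=
  (hp.const_mul (ρ ^ 2)).sub ((h.hasFiniteOrder_snd hp).const_mul ρ)

lemma meromorphic_darbouxForm (h : IsHamSolution α β p q) (ρ : ℂ) :
    Meromorphic (darbouxForm ρ p q) := fun z ↦ by
  have := h.meromorphic_fst z
  have := h.meromorphic_snd z
  unfold darbouxForm
  fun_prop

lemma hasDerivAt_darbouxForm (h : IsHamSolution α β p q) (hρ : ρ ^ 3 = 1)
    (hαβ : ρ ^ 2 * α - ρ * β + 1 = 0) {z : ℂ} (hp : AnalyticAt ℂ p z) (hq : AnalyticAt ℂ q z) :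
    HasDerivAt (darbouxForm ρ p q) (darbouxCofactor ρ p q z * darbouxForm ρ p q z) z := by
  refine ((((h.hasDerivAt_fst hp hq).const_mul (ρ ^ 2)).add
    ((h.hasDerivAt_snd hp hq).const_mul ρ)).sub (hasDerivAt_id z)).congr_deriv ?_
  simp only [darbouxCofactor, darbouxForm]
  linear_combination -ρ * p z ^ 2 * hρ - hαβ

lemma hasDerivAt_darbouxCofactor (h : IsHamSolution α β p q) {z : ℂ}
    (hp : AnalyticAt ℂ p z) (hq : AnalyticAt ℂ q z) :
    HasDerivAt (darbouxCofactor ρ p q) (ρ ^ 2 * (-q z ^ 2 - z * p z - α) -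
      ρ * (p z ^ 2 + z * q z + β)) z :=
  ((h.hasDerivAt_fst hp hq).const_mul (ρ ^ 2)).sub ((h.hasDerivAt_snd hp hq).const_mul ρ)

-- The right-hand side is a polynomial in `z`, the cofactor and its derivative: a bound on the
-- proximity function of the logarithmic derivative therefore passes to `darbouxForm` itself.
lemma darbouxForm_add_sq (h : IsHamSolution α β p q) (hρ : ρ ^ 3 = 1) {z : ℂ}
    (hp : AnalyticAt ℂ p z) (hq : AnalyticAt ℂ q z) :
    (darbouxForm ρ p q z + 2 * z) ^ 2 = z ^ 2 - 2 * deriv (darbouxCofactor ρ p q) z -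
      darbouxCofactor ρ p q z ^ 2 - 2 * (ρ ^ 2 * α + ρ * β) := by
  rw [(h.hasDerivAt_darbouxCofactor hp hq).deriv]
  simp only [darbouxCofactor, darbouxForm]
  linear_combination 2 * ρ * p z ^ 2 * hρ

end IsHamSolution

section CubeRoots

lemma sq_mul_add_mul_sq_eq_neg_one {R : Type*} [CommRing R] [IsDomain R] {a ρ : R} (ha : a ^ 3 = 1)
    (hρ : ρ ^ 3 = 1) (hne : a ≠ ρ) : ρ ^ 2 * a + ρ * a ^ 2 = -1 := by
  have factorization : (a - ρ) * (a ^ 2 + a * ρ + ρ ^ 2) = 0 := by linear_combination ha - hρ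
  have sum_eq_zero := (mul_eq_zero.1 factorization).resolve_left (sub_ne_zero.2 hne)
  linear_combination ρ * sum_eq_zero - hρ

lemma eq_or_eq_or_eq_of_pow_three_eq_one {R : Type*} [CommRing R] [IsDomain R] {a ρ₁ ρ₂ ρ₃ : R}
    (ha : a ^ 3 = 1) (h1 : ρ₁ ^ 3 = 1) (h2 : ρ₂ ^ 3 = 1) (h3 : ρ₃ ^ 3 = 1) (h12 : ρ₁ ≠ ρ₂)
    (h13 : ρ₁ ≠ ρ₃) (h23 : ρ₂ ≠ ρ₃) : a = ρ₁ ∨ a = ρ₂ ∨ a = ρ₃ := by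
  classical
  have subset_nthRoots : {ρ₁, ρ₂, ρ₃} ⊆ (Polynomial.nthRoots 3 (1 : R)).toFinset := by
    simp [Finset.insert_subset_iff, Polynomial.mem_nthRoots, h1, h2, h3]
  have card_eq : ({ρ₁, ρ₂, ρ₃} : Finset R).card = 3 := Finset.card_eq_three.2
    ⟨ρ₁, ρ₂, ρ₃, h12, h13, h23, rfl⟩
  have card_le : (Polynomial.nthRoots 3 (1 : R)).toFinset.card ≤ 3 :=
    (Multiset.toFinset_card_le _).trans (Polynomial.card_nthRoots 3 1)
  have mem_nthRoots : a ∈ (Polynomial.nthRoots 3 (1 : R)).toFinset := by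
    simp [Polynomial.mem_nthRoots, ha]
  rw [← Finset.eq_of_subset_of_card_le subset_nthRoots (card_eq ▸ card_le)] at mem_nthRoots
  simpa only [Finset.mem_insert, Finset.mem_singleton] using mem_nthRoots

end CubeRoots

lemma setCount_eq_sum_indicator {S : Set ℂ} {r : ℝ} {T : Finset ℂ}
    (subset : S ∩ Metric.closedBall 0 r ⊆ T) (norm_le : ∀ z ∈ T, ‖z‖ ≤ r) :
    setCount S r = ∑ z ∈ T, S.indicator 1 z := by
  classical
  have eq_filter : S ∩ Metric.closedBall 0 r = ↑{z ∈ T | z ∈ S} := by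
    ext z
    simp only [Finset.coe_filter, Set.mem_ofPred_eq]
    exact ⟨fun hz ↦ ⟨subset hz, hz.1⟩, fun hz ↦ ⟨hz.2, by simpa using norm_le z hz.1⟩⟩
  rw [setCount, eq_filter, Set.ncard_coe_finset, Finset.card_filter]
  push_cast
  rfl

/-- The set `Λ^ρ` of simple poles of `p` with residue `ρ`, which is only used for `ρ ^ 3 = 1`. -/
def polesWithResidue (p : ℂ → ℂ) (ρ : ℂ) : Set ℂ := {z | IsPole p z ∧ HasResidue p z ρ}

lemma mem_polesWithResidue_iff {p : ℂ → ℂ} {u a ρ : ℂ} (residue_eq : HasResidue p u a) :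
    u ∈ polesWithResidue p ρ ↔ IsPole p u ∧ a = ρ :=
  and_congr_right fun _ ↦ ⟨tendsto_nhds_unique residue_eq, fun eq ↦ eq ▸ residue_eq⟩

lemma polesWithResidue_subset (p : ℂ → ℂ) (ρ : ℂ) : polesWithResidue p ρ ⊆ {z | IsPole p z} :=
  fun _ hz ↦ hz.1

lemma isPole_inter_closedBall_subset_ballSupport {p : ℂ → ℂ} (hp : Meromorphic p) (r : ℝ) :
    {z | IsPole p z} ∩ Metric.closedBall 0 r ⊆
      ballSupport (MeromorphicOn.divisor p Set.univ) r := by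
  rintro z ⟨isPole, hz⟩
  have order_neg := (isPole_iff_meromorphicOrderAt_neg (hp z)).1 isPole
  refine mem_ballSupport.2 ⟨by simpa using hz, ?_⟩
  rw [hp.meromorphicOn.divisor_apply (Set.mem_univ z), Ne, WithTop.untop₀_eq_zero, not_or]
  exact ⟨order_neg.ne, (order_neg.trans_le le_top).ne⟩

namespace IsHamSolution

open MeromorphicOn ValueDistribution

variable {α β ρ : ℂ} {p q : ℂ → ℂ}

lemma darbouxCofactor_eventuallyEq_logDeriv (h : IsHamSolution α β p q) (hρ : ρ ^ 3 = 1)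
    (hαβ : ρ ^ 2 * α - ρ * β + 1 = 0)
    (order_ne_top : ∀ z, meromorphicOrderAt (darbouxForm ρ p q) z ≠ ⊤) :
    darbouxCofactor ρ p q =ᶠ[codiscrete ℂ] logDeriv (darbouxForm ρ p q) := by
  have ne_zero : ∀ᶠ z in codiscrete ℂ, darbouxForm ρ p q z ≠ 0 :=
    eventually_codiscrete_iff.2 fun z ↦ (meromorphicOrderAt_ne_top_iff_eventually_ne_zero
      (h.meromorphic_darbouxForm ρ z)).1 (order_ne_top z)
  filter_upwards [h.eventually_analyticAt, ne_zero] with z ⟨hp, hq⟩ hz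
  rw [logDeriv_apply, (h.hasDerivAt_darbouxForm hρ hαβ hp hq).deriv, mul_div_cancel_right₀ _ hz]

lemma divisor_darbouxForm (h : IsHamSolution α β p q) (hρ : ρ ^ 3 = 1)
    (hαβ : ρ ^ 2 * α - ρ * β + 1 = 0)
    (order_ne_top : ∀ z, meromorphicOrderAt (darbouxForm ρ p q) z ≠ ⊤) {u a : ℂ}
    (residue_fst : HasResidue p u a) (residue_snd : HasResidue q u (-a ^ 2)) :
    (divisor (darbouxForm ρ p q) Set.univ u : ℂ) = ρ ^ 2 * a + ρ * a ^ 2 := by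
  obtain ⟨k, order_eq⟩ := WithTop.ne_top_iff_exists.1 (order_ne_top u)
  have residue_cofactor :
      Tendsto (fun z ↦ (z - u) * darbouxCofactor ρ p q z) (𝓝[≠] u) (𝓝 (ρ ^ 2 * a - ρ * -a ^ 2)) :=
    ((residue_fst.const_mul (ρ ^ 2)).sub (residue_snd.const_mul ρ)).congr fun z ↦ by
      rw [darbouxCofactor]; ring
  have order_tendsto := tendsto_sub_mul_logDeriv (h.meromorphic_darbouxForm ρ u) order_eq.symm
  have k_eq := tendsto_nhds_unique_of_eventuallyEq order_tendsto residue_cofactor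
    ((eventually_codiscrete_iff.1 (h.darbouxCofactor_eventuallyEq_logDeriv hρ hαβ order_ne_top)
      u).mono fun z hz ↦ congrArg _ hz.symm)
  rw [(h.meromorphic_darbouxForm ρ).meromorphicOn.divisor_apply (Set.mem_univ u), ← order_eq,
    WithTop.untop₀_coe, k_eq]
  ring

lemma divisor_darbouxForm_eq_indicator (h : IsHamSolution α β p q) (hρ : ρ ^ 3 = 1)
    (hαβ : ρ ^ 2 * α - ρ * β + 1 = 0)
    (order_ne_top : ∀ z, meromorphicOrderAt (darbouxForm ρ p q) z ≠ ⊤) (u : ℂ) :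
    (divisor (darbouxForm ρ p q) Set.univ u : ℝ) =
      3 * (polesWithResidue p ρ).indicator 1 u - {z | IsPole p z}.indicator 1 u := by
  obtain ⟨a, residue_fst, residue_snd, ha⟩ := h.exists_hasResidue u
  have divisor_eq := h.divisor_darbouxForm hρ hαβ order_ne_top residue_fst residue_snd
  have mem_iff := mem_polesWithResidue_iff (ρ := ρ) residue_fst
  rw [← Complex.ofReal_inj, Complex.ofReal_intCast, divisor_eq]
  rcases ha with ⟨rfl, not_isPole⟩ | ⟨ha, isPole⟩
  · simp [mem_iff, not_isPole]
  by_cases a_eq : a = ρ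
  · subst a_eq
    simp only [mem_iff, isPole, and_self, Set.indicator_of_mem, Set.mem_ofPred_eq, Pi.one_apply]
    push_cast
    linear_combination 2 * hρ
  · rw [sq_mul_add_mul_sq_eq_neg_one ha hρ a_eq]
    simp [mem_iff, isPole, a_eq]

lemma ballCount_divisor_darbouxForm (h : IsHamSolution α β p q) (hρ : ρ ^ 3 = 1)
    (hαβ : ρ ^ 2 * α - ρ * β + 1 = 0)
    (order_ne_top : ∀ z, meromorphicOrderAt (darbouxForm ρ p q) z ≠ ⊤) (r : ℝ) :
    ballCount (divisor (darbouxForm ρ p q) Set.univ) r =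
      3 * setCount (polesWithResidue p ρ) r - setCount {z | IsPole p z} r := by
  have divisor_eq := h.divisor_darbouxForm_eq_indicator hρ hαβ order_ne_top
  have norm_le : ∀ z ∈ ballSupport (divisor (darbouxForm ρ p q) Set.univ) r, ‖z‖ ≤ r :=
    fun z hz ↦ (mem_ballSupport.1 hz).1
  have poles_subset : {z | IsPole p z} ∩ Metric.closedBall 0 r ⊆
      ballSupport (divisor (darbouxForm ρ p q) Set.univ) r := by
    rintro z ⟨isPole, hz⟩
    refine mem_ballSupport.2 ⟨by simpa using hz, fun divisor_eq_zero ↦ ?_⟩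
    have indicator_eq := divisor_eq z
    by_cases mem : z ∈ polesWithResidue p ρ <;>
      norm_num [divisor_eq_zero, Set.indicator_of_mem isPole, mem] at indicator_eq
  have subset : polesWithResidue p ρ ∩ Metric.closedBall 0 r ⊆
      ballSupport (divisor (darbouxForm ρ p q) Set.univ) r :=
    (Set.inter_subset_inter_left _ (polesWithResidue_subset p ρ)).trans poles_subset
  rw [ballCount_eq_sum _ le_rfl, setCount_eq_sum_indicator subset norm_le,
    setCount_eq_sum_indicator poles_subset norm_le, Finset.mul_sum, ← Finset.sum_sub_distrib]
  exact Finset.sum_congr rfl fun z hz ↦ by rw [if_pos (norm_le z hz), divisor_eq]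

lemma indicator_isPole (h : IsHamSolution α β p q) {ρ₁ ρ₂ ρ₃ : ℂ} (h1 : ρ₁ ^ 3 = 1)
    (h2 : ρ₂ ^ 3 = 1) (h3 : ρ₃ ^ 3 = 1) (h12 : ρ₁ ≠ ρ₂) (h13 : ρ₁ ≠ ρ₃) (h23 : ρ₂ ≠ ρ₃) (u : ℂ) :
    {z | IsPole p z}.indicator (1 : ℂ → ℝ) u = (polesWithResidue p ρ₁).indicator 1 u +
      (polesWithResidue p ρ₂).indicator 1 u + (polesWithResidue p ρ₃).indicator 1 u := by
  classical
  obtain ⟨a, residue_fst, -, ha⟩ := h.exists_hasResidue u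
  simp only [Set.indicator_apply, Set.mem_ofPred_eq, mem_polesWithResidue_iff residue_fst]
  rcases ha with ⟨-, not_isPole⟩ | ⟨ha, isPole⟩
  · simp [not_isPole]
  · rcases eq_or_eq_or_eq_of_pow_three_eq_one ha h1 h2 h3 h12 h13 h23 with rfl | rfl | rfl
    · simp [isPole, h12, h13]
    · simp [isPole, h12.symm, h23]
    · simp [isPole, h13.symm, h23.symm]

lemma setCount_isPole (h : IsHamSolution α β p q) {ρ₁ ρ₂ ρ₃ : ℂ} (h1 : ρ₁ ^ 3 = 1)
    (h2 : ρ₂ ^ 3 = 1) (h3 : ρ₃ ^ 3 = 1) (h12 : ρ₁ ≠ ρ₂) (h13 : ρ₁ ≠ ρ₃) (h23 : ρ₂ ≠ ρ₃) (r : ℝ) :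
    setCount {z | IsPole p z} r = setCount (polesWithResidue p ρ₁) r +
      setCount (polesWithResidue p ρ₂) r + setCount (polesWithResidue p ρ₃) r := by
  have norm_le : ∀ z ∈ ballSupport (divisor p Set.univ) r, ‖z‖ ≤ r :=
    fun z hz ↦ (mem_ballSupport.1 hz).1
  have poles_subset := isPole_inter_closedBall_subset_ballSupport h.meromorphic_fst r
  have subset : ∀ ρ, polesWithResidue p ρ ∩ Metric.closedBall 0 r ⊆
      ballSupport (divisor p Set.univ) r :=
    fun ρ ↦ (Set.inter_subset_inter_left _ (polesWithResidue_subset p ρ)).trans poles_subset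
  simp only [setCount_eq_sum_indicator poles_subset norm_le,
    setCount_eq_sum_indicator (subset _) norm_le, ← Finset.sum_add_distrib]
  exact Finset.sum_congr rfl fun z _ ↦ h.indicator_isPole h1 h2 h3 h12 h13 h23 z

end IsHamSolution

/-! ### Jensen's formula -/

section Jensen

open Function MeromorphicOn Real ValueDistribution

variable {f : ℂ → ℂ}

lemma circleAverage_log_norm_le_proximity (hf : Meromorphic f) (r : ℝ) :
    circleAverage (fun z ↦ log ‖f z‖) 0 r ≤ proximity f ⊤ r := by
  rw [proximity_top]
  exact circleAverage_mono (circleIntegrable_log_norm hf.meromorphicOn)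
    (circleIntegrable_posLog_norm hf.meromorphicOn) fun z _ ↦ le_max_right _ _

lemma exists_logCounting_divisor_le (hf : Meromorphic f) : ∃ C, ∀ r ≠ 0,
    locallyFinsuppWithin.logCounting (divisor f Set.univ) r ≤ proximity f ⊤ r + C := by
  refine ⟨-log ‖meromorphicTrailingCoeffAt f 0‖, fun r hr ↦ ?_⟩
  rw [locallyFinsuppWithin.logCounting_divisor_eq_circleAverage_sub_const hf hr, sub_eq_add_neg]
  exact add_le_add_left (circleAverage_log_norm_le_proximity hf r) _

theorem HasProximityIsBigO.not_eventually_le_ballCount (hf : HasProximityIsBigO f log) {c : ℝ}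
    (hc : 0 < c) (k : ℕ) : ¬∀ᶠ t in atTop, c * t ^ (k + 1) ≤ ballCount (divisor f Set.univ) t := by
  intro hcount
  obtain ⟨C, hC⟩ := exists_logCounting_divisor_le hf.1
  have pow_isBigO_log : (fun r ↦ c / (2 * (k + 1)) * r ^ (k + 1)) =O[atTop] log := by
    refine IsBigO.trans (.of_bound' ?_)
      (hf.2.add (isLittleO_const_log_atTop (c := C)).isBigO)
    filter_upwards [eventually_le_logCounting_of_eventually_le_ballCount hc k hcount,
      eventually_gt_atTop 0] with r le_logCounting hr
    rw [norm_of_nonneg (by positivity)]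
    exact (le_logCounting.trans (hC r hr.ne')).trans (le_norm_self _)
  have pow_isLittleO : (fun r : ℝ ↦ r ^ (k + 1)) =o[atTop] (fun r ↦ r ^ (k + 1)) :=
    ((isBigO_const_mul_left_iff (by positivity)).1 pow_isBigO_log).trans_isLittleO
      (isLittleO_log_id_atTop.trans_isBigO
        (by simpa only [pow_one] using! pow_isBigO_pow (Nat.le_add_left 1 k)))
  refine isLittleO_irrefl (Eventually.frequently ?_) pow_isLittleO
  filter_upwards [eventually_ne_atTop 0] with r hr using pow_ne_zero _ hr

end Jensen

namespace IsHamSolution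

open MeromorphicOn ValueDistribution

variable {α β ρ : ℂ} {p q : ℂ → ℂ}

lemma hasProximityIsBigO_darbouxCofactor (h : IsHamSolution α β p q) (hp : HasFiniteOrder p)
    (hρ : ρ ^ 3 = 1) (hαβ : ρ ^ 2 * α - ρ * β + 1 = 0)
    (order_ne_top : ∀ z, meromorphicOrderAt (darbouxForm ρ p q) z ≠ ⊤) :
    HasProximityIsBigO (darbouxCofactor ρ p q) Real.log :=
  (h.hasFiniteOrder_darbouxForm hp ρ).hasProximityIsBigO_logDeriv.congr
    (h.hasFiniteOrder_darbouxCofactor hp ρ).1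
    (h.darbouxCofactor_eventuallyEq_logDeriv hρ hαβ order_ne_top).symm

lemma hasProximityIsBigO_darbouxForm (h : IsHamSolution α β p q) (hp : HasFiniteOrder p)
    (hρ : ρ ^ 3 = 1) (hαβ : ρ ^ 2 * α - ρ * β + 1 = 0)
    (order_ne_top : ∀ z, meromorphicOrderAt (darbouxForm ρ p q) z ≠ ⊤) :
    HasProximityIsBigO (darbouxForm ρ p q) Real.log := by
  have one_isBigO : (1 : ℝ → ℝ) =O[atTop] Real.log := Real.isLittleO_const_log_atTop.isBigO
  have const (c : ℂ) : HasProximityIsBigO (fun _ ↦ c) Real.log := .const c one_isBigO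
  have id_proximity := HasProximityIsBigO.id
  have cofactor := h.hasProximityIsBigO_darbouxCofactor hp hρ hαβ order_ne_top
  have cofactor_deriv := cofactor.deriv (h.hasFiniteOrder_darbouxCofactor hp ρ) (isBigO_refl _ _)
  have rhs := (((id_proximity.mul id_proximity).sub ((const 2).mul cofactor_deriv) one_isBigO).sub
    (cofactor.mul cofactor) one_isBigO).sub (const (2 * (ρ ^ 2 * α + ρ * β))) one_isBigO
  have shifted_meromorphic : Meromorphic (darbouxForm ρ p q + (fun _ ↦ 2) * fun z ↦ z) :=
    (h.meromorphic_darbouxForm ρ).add ((const 2).mul id_proximity).1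
  have shifted : HasProximityIsBigO (darbouxForm ρ p q + (fun _ ↦ 2) * fun z ↦ z) Real.log := by
    refine .of_pow two_ne_zero shifted_meromorphic (rhs.congr
      (fun z ↦ (shifted_meromorphic z).pow 2) (h.eventually_analyticAt.mono fun z hz ↦ ?_))
    simpa [sq] using (h.darbouxForm_add_sq hρ hz.1 hz.2).symm
  simpa only [add_sub_cancel_right] using shifted.sub ((const 2).mul id_proximity) one_isBigO

end IsHamSolution

lemma IsHamSolution.tendsto_mul_three_mul_setCount_sub {α β : ℂ} {p q : ℂ → ℂ}
    (h : IsHamSolution α β p q) {ρ₁ ρ₂ ρ₃ : ℂ} (h1 : ρ₁ ^ 3 = 1) (h2 : ρ₂ ^ 3 = 1)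
    (h3 : ρ₃ ^ 3 = 1) (h12 : ρ₁ ≠ ρ₂) (h13 : ρ₁ ≠ ρ₃) (h23 : ρ₂ ≠ ρ₃) {w : ℝ → ℝ} {l : Filter ℝ}
    {n₁ n₂ n₃ : ℝ} (tendsto₁ : Tendsto (fun r ↦ w r * setCount (polesWithResidue p ρ₁) r) l (𝓝 n₁))
    (tendsto₂ : Tendsto (fun r ↦ w r * setCount (polesWithResidue p ρ₂) r) l (𝓝 n₂))
    (tendsto₃ : Tendsto (fun r ↦ w r * setCount (polesWithResidue p ρ₃) r) l (𝓝 n₃)) :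
    Tendsto (fun r ↦ w r * (3 * setCount (polesWithResidue p ρ₁) r - setCount {z | IsPole p z} r))
      l (𝓝 (2 * n₁ - n₂ - n₃)) := by
  refine (((tendsto₁.const_mul 2).sub tendsto₂).sub tendsto₃).congr fun r ↦ ?_
  rw [h.setCount_isPole h1 h2 h3 h12 h13 h23]
  ring

lemma eventually_mul_pow_le_of_tendsto {N : ℝ → ℝ} {κ L : ℝ} {k : ℕ} (hκ : 0 < κ) (hL : 0 < L)
    (hN : Tendsto (fun r ↦ κ / r ^ k * N r) atTop (𝓝 L)) :
    ∀ᶠ r in atTop, L / (2 * κ) * r ^ k ≤ N r := by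
  filter_upwards [hN.eventually_const_le (half_lt_self hL), eventually_gt_atTop 0] with r hr r_pos
  calc L / (2 * κ) * r ^ k = L / 2 * (r ^ k / κ) := by ring
    _ ≤ κ / r ^ k * N r * (r ^ k / κ) := by gcongr
    _ = N r := by field_simp

theorem stmt_17_general {α β : ℂ} {p q : ℂ → ℂ} (h : IsHamSolution α β p q)
    (hp : HasFiniteOrder p) {ρ : ℂ} (hρ : ρ ^ 3 = 1) (hαβ : ρ ^ 2 * α - ρ * β + 1 = 0) {c : ℝ}
    (hc : 0 < c) {k : ℕ} (hcount : ∀ᶠ r in atTop, c * r ^ (k + 1) ≤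
      3 * setCount (polesWithResidue p ρ) r - setCount {z | IsPole p z} r) :
    ∀ z : ℂ, AnalyticAt ℂ p z → AnalyticAt ℂ q z → ρ ^ 2 * p z + ρ * q z - z = 0 := by
  intro z hpz hqz
  by_contra ne_zero
  have form_analyticAt : AnalyticAt ℂ (darbouxForm ρ p q) z := by
    unfold darbouxForm
    fun_prop
  have order_eq_zero : meromorphicOrderAt (darbouxForm ρ p q) z = 0 :=
    form_analyticAt.meromorphicNFAt.meromorphicOrderAt_eq_zero_iff.2 ne_zero
  have order_ne_top := (h.meromorphic_darbouxForm ρ).exists_meromorphicOrderAt_ne_top_iff_forall.1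
    ⟨z, order_eq_zero ▸ WithTop.zero_ne_top⟩
  refine (h.hasProximityIsBigO_darbouxForm hp hρ hαβ order_ne_top).not_eventually_le_ballCount
    hc k (hcount.mono fun r hr ↦ ?_)
  rwa [h.ballCount_divisor_darbouxForm hρ hαβ order_ne_top]

/-- (Proposition PROP1.) Let `(p, q)` be a transcendental solution of the
Hamiltonian system with `T(r, p) = O(r²)`, such that the normalized pole densities
`𝔫^ρ = lim (4π/(√3 r²)) n(r, Λ^ρ)` exist for all cube roots of unity `ρ`. If
`ρ₁²α − ρ₁β + 1 = 0` and `𝔫^{ρ₁} > (𝔫^{ρ₂} + 𝔫^{ρ₃})/2`, then `ρ₁²p + ρ₁q − z ≡ 0`. -/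
theorem stmt_17 (α β : ℂ) (p q : ℂ → ℂ) (h : IsHamSolution α β p q)
    (htr : ¬ IsRationalFn p)
    (hT : ∃ C : ℝ, ∀ r : ℝ, 1 ≤ r → nevT p r ≤ C * r ^ 2)
    (nn : ℂ → ℝ)
    (hnn : ∀ ρ : ℂ, ρ ^ 3 = 1 →
      Tendsto (fun r : ℝ => (4 * Real.pi / (Real.sqrt 3 * r ^ 2)) *
        setCount {z | IsPole p z ∧ HasResidue p z ρ} r) atTop (𝓝 (nn ρ)))
    (ρ₁ ρ₂ ρ₃ : ℂ) (h1 : ρ₁ ^ 3 = 1) (h2 : ρ₂ ^ 3 = 1) (h3 : ρ₃ ^ 3 = 1)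
    (h12 : ρ₁ ≠ ρ₂) (h13 : ρ₁ ≠ ρ₃) (h23 : ρ₂ ≠ ρ₃)
    (hαβ : ρ₁ ^ 2 * α - ρ₁ * β + 1 = 0)
    (hbig : nn ρ₁ > (nn ρ₂ + nn ρ₃) / 2) :
    ∀ z : ℂ, AnalyticAt ℂ p z → AnalyticAt ℂ q z →
      ρ₁ ^ 2 * p z + ρ₁ * q z - z = 0 := by
  obtain ⟨C, hC⟩ := hT
  have density_pos : 0 < 2 * nn ρ₁ - nn ρ₂ - nn ρ₃ := by linarith
  have tendsto := h.tendsto_mul_three_mul_setCount_sub h1 h2 h3 h12 h13 h23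
    (hnn ρ₁ h1) (hnn ρ₂ h2) (hnn ρ₃ h3)
  simp only [← div_div] at tendsto
  exact stmt_17_general h (hasFiniteOrder_of_nevT_le h.meromorphic_fst hC) h1 hαβ (by positivity)
    (eventually_mul_pow_le_of_tendsto (by positivity) density_pos tendsto)
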